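/- Let (V,1,𝒮,Y) be a vertex F-algebra over a formal group law F over a commutative ring R. Then weak commutativity holds: for all a,b,c ∈ V there exists M ≥ 0 such that F(z,ι(w))^M · Y(a,z)Y(b,w)c = F(z,ι(w))^M · Y(b,w)Y(a,z)c as bilateral series in V⟦z^{±1},w^{±1}⟧ (here F(z,ι(w))^M ∈ R⟦z,w⟧ since M ≥ 0, Y(a,z)Y(b,w)c ∈ V((w))((z)) and Y(b,w)Y(a,z)c ∈ V((z))((w))). Equivalently, F(z,ι(w))^M may be replaced by (z−w)^M. -/

import Mathlib

/-!
Coefficient-wise formal calculus for vertex `F`-algebras, following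
M. Upmeier, "Vertex F-Algebras and Their Associated Lie Algebra".

Series in one, two or three variables are represented by their coefficient
functions `ℤ → R`, `ℤ → ℤ → R`, …; products are given by coefficient-wise
(finite) sums, expressed via `finsum` (`∑ᶠ`).
-/

open scoped BigOperators

noncomputable section

/-- Generalized binomial coefficient `C(n,k) = n(n-1)⋯(n-k+1)/k!` for `n : ℤ`, `k : ℕ`. -/
def zbinom (n : ℤ) (k : ℕ) : ℤ :=
  if 0 ≤ n then (n.toNat.choose k : ℤ)
  else (-1 : ℤ) ^ k * (((k : ℤ) - n - 1).toNat.choose k : ℤ)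

/-- `C(n,m)` for integer `m`, with `C(n,m) = 0` for `m < 0`. -/
def zbinomZ (n m : ℤ) : ℤ := if m < 0 then 0 else zbinom n m.toNat

/-- `(-1)^n` for `n : ℤ`. -/
def msign (n : ℤ) : ℤ := if Even n then 1 else -1

section Series

variable {R : Type*} [CommRing R] {M : Type*} [AddCommGroup M] [Module R M]

/-- Product of a one-variable series with `R`-coefficients with an `M`-valued one. -/
def mulS (f : ℤ → R) (g : ℤ → M) : ℤ → M := fun n => ∑ᶠ i : ℤ, f i • g (n - i)

/-- The constant series `1` (one variable). -/
def oneS (R : Type*) [CommRing R] : ℤ → R := fun n => if n = 0 then 1 else 0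

/-- Natural powers of a one-variable series. -/
def pow1 (f : ℤ → R) : ℕ → ℤ → R
  | 0 => oneS R
  | k + 1 => mulS f (pow1 f k)

/-- Product of two-variable series. -/
def mulS2 (f : ℤ → ℤ → R) (g : ℤ → ℤ → M) : ℤ → ℤ → M :=
  fun a b => ∑ᶠ p : ℤ × ℤ, f p.1 p.2 • g (a - p.1) (b - p.2)

/-- The constant series `1` (two variables). -/
def oneS2 (R : Type*) [CommRing R] : ℤ → ℤ → R := fun a b => if a = 0 ∧ b = 0 then 1 else 0

/-- Natural powers of a two-variable series. -/
def pow2 (f : ℤ → ℤ → R) : ℕ → ℤ → ℤ → R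
  | 0 => oneS2 R
  | k + 1 => mulS2 f (pow2 f k)

/-- `f ∈ M((z))`: only finitely many negative powers. -/
def IsLaurent (f : ℤ → M) : Prop := ∃ N : ℤ, ∀ n : ℤ, n < N → f n = 0

/-- `f ∈ M((z,w))`: only finitely many nonzero coefficients with some negative index. -/
def IsLaurent2 (f : ℤ → ℤ → M) : Prop :=
  {p : ℤ × ℤ | (p.1 < 0 ∨ p.2 < 0) ∧ f p.1 p.2 ≠ 0}.Finite

/-- Formal derivative of a one-variable series. -/
def fderiv1 (f : ℤ → R) : ℤ → R := fun n => ((n + 1 : ℤ) : R) * f (n + 1)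

/-- The polynomial `z - w` as a two-variable series. -/
def zmw (R : Type*) [CommRing R] : ℤ → ℤ → R :=
  fun i j => if i = 1 ∧ j = 0 then 1 else if i = 0 ∧ j = 1 then -1 else 0

/-- `∂/∂w` of a two-variable series. -/
def d01 (f : ℤ → ℤ → R) : ℤ → ℤ → R := fun i j => ((j + 1 : ℤ) : R) * f i (j + 1)

/-- `∂/∂z` of a two-variable series. -/
def d10 (f : ℤ → ℤ → R) : ℤ → ℤ → R := fun i j => ((i + 1 : ℤ) : R) * f (i + 1) j

/-- Substitution `p(f(z,w))` of a two-variable series (zero constant term) into a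
one-variable power series `p`. -/
def comp2 (p : ℤ → R) (f : ℤ → ℤ → R) : ℤ → ℤ → R :=
  fun a b => ∑ᶠ m : ℕ, p (m : ℤ) * pow2 f m a b

/-- Substitution `p(f(z))` of a one-variable series (zero constant term) into a
one-variable power series `p`. -/
def comp1 (p : ℤ → R) (f : ℤ → R) : ℤ → R :=
  fun a => ∑ᶠ m : ℕ, p (m : ℤ) * pow1 f m a

/-- `(G - z)/z` for `G ≡ z (mod w)`. -/
def hzS (G : ℤ → ℤ → R) : ℤ → ℤ → R := fun i j => G (i + 1) j - oneS2 R i j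

/-- Integer powers `i_{z,w} G^n`, for `G ≡ z (mod w)`, expanded in `R((z))⟦w⟧`:
the Newton expansion `z^n ∑_k C(n,k) ((G-z)/z)^k`. -/
def izwPow (G : ℤ → ℤ → R) (n : ℤ) : ℤ → ℤ → R :=
  fun a b => ∑ᶠ k : ℕ, (zbinom n k : R) * pow2 (hzS G) k (a - n) b

/-- `(G - w)/w` for `G ≡ w (mod z)`. -/
def hwS (G : ℤ → ℤ → R) : ℤ → ℤ → R := fun i j => G i (j + 1) - oneS2 R i j

/-- Integer powers `i_{w,z} G^n`, for `G ≡ w (mod z)`, expanded in `R((w))⟦z⟧`. -/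
def iwzPow (G : ℤ → ℤ → R) (n : ℤ) : ℤ → ℤ → R :=
  fun a b => ∑ᶠ k : ℕ, (zbinom n k : R) * pow2 (hwS G) k a (b - n)

/-- `(G + w)/(-w)` for `G ≡ ι(w) (mod z)`. -/
def hwNegS (G : ℤ → ℤ → R) : ℤ → ℤ → R := fun i j => -G i (j + 1) - oneS2 R i j

/-- Integer powers `i_{w,z} G^n`, for `G ≡ -w(1+⋯) (mod z)` (e.g. `G = F(z, ι w)`),
expanded in `R((w))⟦z⟧`. -/
def iwzPowNeg (G : ℤ → ℤ → R) (n : ℤ) : ℤ → ℤ → R :=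
  fun a b => (msign n : R) * ∑ᶠ k : ℕ, (zbinom n k : R) * pow2 (hwNegS G) k a (b - n)

/-- `(f + z)/(-z)` for a series `f = -z(1 + ⋯)` such as `ι(z)`. -/
def hS (f : ℤ → R) : ℤ → R := fun j => -f (j + 1) - oneS R j

/-- Integer powers `f(z)^n` (`n : ℤ`) for `f = -z(1+⋯)`, e.g. `f = ι(z)`. -/
def iotaPow (f : ℤ → R) (n : ℤ) : ℤ → R :=
  fun a => (msign n : R) * ∑ᶠ k : ℕ, (zbinom n k : R) * pow1 (hS f) k (a - n)

/-- `f - 1` for a power series with constant term `1`. -/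
def hOneS (f : ℤ → R) : ℤ → R := fun j => f j - oneS R j

/-- Multiplicative inverse of a power series with constant term `1`. -/
def invOne (f : ℤ → R) : ℤ → R :=
  fun a => ∑ᶠ k : ℕ, ((-1 : R) ^ k) * pow1 (hOneS f) k a

end Series

/-- A (one-dimensional, commutative) formal group law `F(z,w)` over `R`, together with
its (unique) inverse `ι`. -/
structure FormalGroupLaw (R : Type*) [CommRing R] where
  F : ℤ → ℤ → R
  F_supp : ∀ i j : ℤ, i < 0 ∨ j < 0 → F i j = 0
  /-- `F(z,0) = z`, so that `F(z,w) = z + w + O(zw)` using commutativity. -/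
  F_modw : ∀ i : ℤ, F i 0 = if i = 1 then 1 else 0
  F_comm : ∀ i j : ℤ, F i j = F j i
  /-- associativity `F(F(z,w),v) = F(z,F(w,v))`, coefficient-wise. -/
  F_assoc : ∀ a b c : ℤ,
    (∑ᶠ m : ℕ, F (m : ℤ) c * pow2 F m a b) = ∑ᶠ n : ℕ, F a (n : ℤ) * pow2 F n b c
  /-- the inverse `ι(z) = -z + O(z²)`. -/
  inv : ℤ → R
  inv_supp : ∀ n : ℤ, n < 1 → inv n = 0
  inv_one : inv 1 = -1
  /-- `F(z, ι(z)) = 0`, coefficient-wise. -/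
  inv_eq : ∀ n : ℤ, (∑ᶠ p : ℤ × ℕ, F p.1 (p.2 : ℤ) * pow1 inv p.2 (n - p.1)) = 0

namespace FormalGroupLaw

variable {R : Type*} [CommRing R] {M : Type*} [AddCommGroup M] [Module R M]

/-- The series `F(z, ι(w))`. -/
def Fzi (𝓕 : FormalGroupLaw R) : ℤ → ℤ → R :=
  fun i j => ∑ᶠ m : ℕ, 𝓕.F i (m : ℤ) * pow1 𝓕.inv m j

/-- The `F`-delta distribution `z⁻¹δ_F(w/z) = i_{z,w}F(z,ιw)⁻¹ - i_{w,z}F(z,ιw)⁻¹`. -/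
def delta (𝓕 : FormalGroupLaw R) : ℤ → ℤ → R :=
  fun a b => izwPow 𝓕.Fzi (-1) a b - iwzPowNeg 𝓕.Fzi (-1) a b

/-- `p_F(z) = F^{0,1}(z,0)⁻¹`, the coefficient series of the invariant 1-form. -/
def pF (𝓕 : FormalGroupLaw R) : ℤ → R := invOne (fun i => 𝓕.F i 1)

/-- `F`-residue: the coefficient of `z⁻¹` in `f(z)·p_F(z)`. -/
def resF (𝓕 : FormalGroupLaw R) (f : ℤ → M) : M := ∑ᶠ i : ℤ, 𝓕.pF i • f (-1 - i)

/-- The `F`-hyperderivative `𝒮^F_n f`, defined by `i_{z,w}f(F(z,w)) = ∑_n (𝒮^F_n f)(z) wⁿ`. -/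
def hyper (𝓕 : FormalGroupLaw R) (n : ℕ) (f : ℤ → R) : ℤ → R :=
  fun a => ∑ᶠ m : ℤ, f m * izwPow 𝓕.F m a (n : ℤ)

/-- `F`-binomial coefficients: `i_{z,w}F(z,w)^n = ∑_{i,j} binomF(n;i,j) z^i w^j`. -/
def binomF (𝓕 : FormalGroupLaw R) (n i j : ℤ) : R := izwPow 𝓕.F n i j

/-- `φ` is a logarithm of `F`: `φ(F(z,w)) = φ(z) + φ(w)`, `φ(0) = 0`, `φ'(0) = 1`. -/
def IsLogarithm (𝓕 : FormalGroupLaw R) (φ : ℤ → R) : Prop :=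
  (∀ n : ℤ, n < 0 → φ n = 0) ∧ φ 0 = 0 ∧ φ 1 = 1 ∧
  ∀ a b : ℤ, (∑ᶠ m : ℕ, φ (m : ℤ) * pow2 𝓕.F m a b)
    = (if b = 0 then φ a else 0) + (if a = 0 then φ b else 0)

end FormalGroupLaw

section Vertex

variable {R : Type*} [CommRing R] {V : Type*} [AddCommGroup V] [Module R V]

/-- For `c = ∑_m c_m v^m ∈ V((v))`, the substitution `v ↦ F(z,w)` (coefficient `(k,n)` of
`z^k w^n`, expanded in `V((z))⟦w⟧`). -/
def substF (𝓕 : FormalGroupLaw R) (c : ℤ → V) : ℤ → ℤ → V :=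
  fun k n => ∑ᶠ m : ℤ, izwPow 𝓕.F m k n • c m

/-- Coefficients of `i_{z,w} Y(a, F(z,w)) (Y(b,w)c)`, where `Ya v = Y(a,·)v` and
`d = Y(b,·)c`. -/
def substFProd (𝓕 : FormalGroupLaw R) (Ya : V → ℤ → V) (d : ℤ → V) : ℤ → ℤ → V :=
  fun k n => ∑ᶠ q : ℤ × ℤ, izwPow 𝓕.F q.1 k (n - q.2) • Ya (d q.2) q.1

end Vertex

/-- A vertex `F`-algebra `(V, 𝟙, 𝒮, Y)` over the formal group law `𝓕`.
`Y a b : ℤ → V` records the coefficients of `Y(a,z)b = ∑_k (Y a b k) z^k`, and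
`S n` is the component `𝒮⁽ⁿ⁾` of the `F`-shift operator `𝒮(z) = ∑_{n≥0} 𝒮⁽ⁿ⁾ zⁿ`. -/
structure VertexFAlgebra (R : Type*) [CommRing R] (𝓕 : FormalGroupLaw R)
    (V : Type*) [AddCommGroup V] [Module R V] where
  vac : V
  S : ℕ → V →ₗ[R] V
  Y : V →ₗ[R] V →ₗ[R] (ℤ → V)
  /-- `Y(a,z)b ∈ V((z))`. -/
  Y_laurent : ∀ a b : V, IsLaurent (Y a b)
  /-- `Y(a,z)𝟙` is holomorphic. -/
  vac_holo : ∀ (a : V) (k : ℤ), k < 0 → Y a vac k = 0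
  /-- `Y(a,z)𝟙|_{z=0} = a`. -/
  creation : ∀ a : V, Y a vac 0 = a
  /-- `Y(𝟙,z) = id`. -/
  Y_vac : ∀ (b : V) (k : ℤ), Y vac b k = if k = 0 then b else 0
  /-- `𝒮(0) = id`. -/
  S_zero : S 0 = LinearMap.id
  /-- `𝒮(z)𝟙 = 𝟙`. -/
  S_vac : ∀ n : ℕ, 1 ≤ n → S n vac = 0
  /-- `𝒮(z) ∘ 𝒮(w) = 𝒮(F(z,w))`, coefficient-wise. -/
  S_comp : ∀ (a : V) (i j : ℕ),
    S i (S j a) = ∑ᶠ m : ℕ, pow2 𝓕.F m (i : ℤ) (j : ℤ) • S m a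
  /-- `F`-translation covariance `Y(𝒮(w)a, z)b = i_{z,w} Y(a,F(z,w))b`. -/
  translation : ∀ (a b : V) (k : ℤ) (n : ℕ),
    Y (S n a) b k = substF 𝓕 (Y a b) k (n : ℤ)
  /-- weak `F`-associativity. -/
  weak_assoc : ∀ a b c : V, ∃ N : ℕ,
    mulS2 (pow2 𝓕.F N) (fun k l => Y (Y a b k) c l)
      = mulS2 (pow2 𝓕.F N) (substFProd 𝓕 (fun v => Y a v) (Y b c))
  /-- skew symmetry `Y(a,z)b = 𝒮(z)(Y(b,ι(z))a)`, coefficient-wise. -/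
  skew : ∀ (a b : V) (k : ℤ),
    Y a b k = ∑ᶠ q : ℕ × ℤ, iotaPow 𝓕.inv q.2 (k - (q.1 : ℤ)) • S q.1 (Y b a q.2)

end

/-!
Skew symmetry gives `Y(b,w)Y(a,z)c = 𝒮(w) Y(Y(a,z)c, ι(w))b`. In the same way, translation
covariance and `F(F(z,ι(w)), w) = z` present `Y(a,z)Y(b,w)c` as `𝒮(w)` applied to
`i Y(a,F(z,v)) Y(c,v)b` at `v = ι(w)`. Weak associativity for `a, c, b` identifies the two arguments
of `𝒮(w)` up to the factor `F(z,v)^N`, which becomes `F(z,ι(w))^N`.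

The expansions are compared in the ring of series in `z` and `w` with exponents of `z^k w^l` bounded
below in `k + l` and `l`. Under `F`, its elements of positive order form an abelian group, so that
identities between iterated substitutions of `F` and `ι` are identities in an abelian group.
-/

section Finsum

variable {α β M N : Type*} [AddCommMonoid M] [AddCommMonoid N]

theorem exists_ne_zero_of_finsum_ne_zero {f : α → M} (h : ∑ᶠ a, f a ≠ 0) : ∃ a, f a ≠ 0 := by
  by_contra! h₀
  exact h (finsum_eq_zero_of_forall_eq_zero h₀)

theorem finsum_comp_of_support_subset_range (f : β → M) {φ : α → β} (hφ : Function.Injective φ)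
    (hf : Function.support f ⊆ Set.range φ) : ∑ᶠ a, f (φ a) = ∑ᶠ b, f b := by
  rw [← finsum_mem_range hφ, ← finsum_mem_univ f]
  refine finsum_mem_inter_support_eq f _ _ ?_
  rw [Set.univ_inter, Set.inter_eq_right.2 hf]

theorem finsum_natCast {f : ℤ → M} (hf : ∀ n < 0, f n = 0) : ∑ᶠ n : ℕ, f n = ∑ᶠ n, f n := by
  refine finsum_comp_of_support_subset_range f Nat.cast_injective fun n hn => ?_
  obtain ⟨m, rfl⟩ := Int.eq_ofNat_of_zero_le (not_lt.1 fun h => hn (hf n h))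
  exact ⟨m, rfl⟩

theorem finsum_prod_eq_finsum_fst {f : α × β → M} (b : β) (hf : ∀ p, f p ≠ 0 → p.2 = b) :
    ∑ᶠ p, f p = ∑ᶠ a, f (a, b) :=
  (finsum_comp_of_support_subset_range f (Prod.mk_left_injective b)
    fun p hp => ⟨p.1, Prod.ext rfl (hf p hp).symm⟩).symm

theorem finsum_prod_eq_finsum_snd {f : α × β → M} (a : α) (hf : ∀ p, f p ≠ 0 → p.1 = a) :
    ∑ᶠ p, f p = ∑ᶠ b, f (a, b) :=
  (finsum_comp_of_support_subset_range f (Prod.mk_right_injective a)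
    fun p hp => ⟨p.2, Prod.ext (hf p hp).symm rfl⟩).symm

theorem finsum_nat_eq_zero_add {f : ℕ → M} (hf : f.support.Finite) :
    ∑ᶠ n, f n = f 0 + ∑ᶠ n, f (n + 1) := by
  obtain ⟨N, hN⟩ := hf.bddAbove
  have hN' (n : ℕ) (hn : f n ≠ 0) : n < N + 1 := Nat.lt_succ_of_le (hN hn)
  rw [finsum_eq_sum_of_support_subset (s := Finset.range (N + 1)) f fun n hn => by
      simpa using hN' n hn,
    finsum_eq_sum_of_support_subset (s := Finset.range N) _ fun n hn => by
      simpa using hN' (n + 1) hn,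
    Finset.sum_range_succ', add_comm]

theorem finsum_map_finsum (g : α → M →+ N) (f : α → β → M)
    (h : {p : α × β | g p.1 ≠ 0 ∧ f p.1 p.2 ≠ 0}.Finite) :
    ∑ᶠ a, g a (∑ᶠ b, f a b) = ∑ᶠ p : α × β, g p.1 (f p.1 p.2) := by
  rw [finsum_curry]
  · refine finsum_congr fun a => ?_
    by_cases ha : g a = 0
    · simp [ha]
    · exact (g a).map_finsum ((h.image Prod.snd).subset fun b hb => ⟨(a, b), ⟨ha, hb⟩, rfl⟩)
  · refine h.subset fun p hp => ⟨fun h₀ => ?_, fun h₀ => ?_⟩ <;> simp [h₀] at hp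

variable {γ R V : Type*} [CommRing R] [AddCommGroup V] [Module R V]

theorem map_finsum_smul {W : Type*} [AddCommGroup W] [Module R W] (φ : V →ₗ[R] W) {c : α → R}
    {u : α → V} (h : {a | c a ≠ 0 ∧ u a ≠ 0}.Finite) :
    φ (∑ᶠ a, c a • u a) = ∑ᶠ a, c a • φ (u a) := by
  have h' : (Function.support fun a => c a • u a).Finite :=
    h.subset fun a ha => ⟨left_ne_zero_of_smul ha, right_ne_zero_of_smul ha⟩
  exact (φ.toAddMonoidHom.map_finsum h').trans (finsum_congr fun a => φ.map_smul (c a) (u a))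

theorem finsum_smul_finsum (c : α → R) (f : α → β → V)
    (h : {p : α × β | c p.1 ≠ 0 ∧ f p.1 p.2 ≠ 0}.Finite) :
    ∑ᶠ a, c a • ∑ᶠ b, f a b = ∑ᶠ p : α × β, c p.1 • f p.1 p.2 :=
  finsum_map_finsum (fun a => DistribSMul.toAddMonoidHom V (c a)) f <|
    h.subset fun _ hp => ⟨fun h₀ => hp.1 (by ext; simp [h₀]), hp.2⟩

theorem finsum_finsum_smul (c : α → β → R) (u : α → V)
    (h : {p : α × β | c p.1 p.2 ≠ 0 ∧ u p.1 ≠ 0}.Finite) :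
    ∑ᶠ a, (∑ᶠ b, c a b) • u a = ∑ᶠ p : α × β, c p.1 p.2 • u p.1 :=
  finsum_map_finsum (fun a => (smulAddHom R V).flip (u a)) c <|
    h.subset fun _ hp => ⟨hp.2, fun h₀ => hp.1 (by ext; simp [h₀])⟩

/-- Composition of a row vector `c`, a matrix `d` and a column vector `u`, in a family of such
triples indexed by `γ`. -/
theorem finsum_smul_finsum_smul (c : γ → α → R) (d : γ → α → β → R) (u : γ → β → V)
    (h : {t : γ × α × β | c t.1 t.2.1 ≠ 0 ∧ d t.1 t.2.1 t.2.2 ≠ 0 ∧ u t.1 t.2.2 ≠ 0}.Finite) :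
    ∑ᶠ p : γ × α, c p.1 p.2 • ∑ᶠ b, d p.1 p.2 b • u p.1 b =
      ∑ᶠ p : γ × β, (∑ᶠ a, c p.1 a * d p.1 a p.2) • u p.1 p.2 := by
  let e : (γ × β) × α ≃ (γ × α) × β :=
    ⟨fun t => ((t.1.1, t.2), t.1.2), fun t => ((t.1.1, t.2), t.1.2), fun _ => rfl, fun _ => rfl⟩
  have h' := h.preimage (Equiv.prodAssoc γ α β).injective.injOn
  rw [finsum_smul_finsum (fun p : γ × α => c p.1 p.2) (fun p b => d p.1 p.2 b • u p.1 b),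
    finsum_finsum_smul (fun (p : γ × β) a => c p.1 a * d p.1 a p.2) (fun p => u p.1 p.2),
    ← finsum_comp_equiv e]
  · exact finsum_congr fun t => smul_smul _ _ _
  · refine (h'.preimage e.injective.injOn).subset fun t ht => ?_
    exact ⟨left_ne_zero_of_mul ht.1, right_ne_zero_of_mul ht.1, ht.2⟩
  · refine h'.subset fun t ht => ?_
    exact ⟨ht.1, left_ne_zero_of_smul ht.2, right_ne_zero_of_smul ht.2⟩

theorem finsum_smul_finsum_smul_swap (c : γ → α → R) (d : γ → α → β → R) (u : γ → β → V)
    (h : {t : γ × α × β | c t.1 t.2.1 ≠ 0 ∧ d t.1 t.2.1 t.2.2 ≠ 0 ∧ u t.1 t.2.2 ≠ 0}.Finite) :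
    ∑ᶠ p : α × γ, c p.2 p.1 • ∑ᶠ b, d p.2 p.1 b • u p.2 b =
      ∑ᶠ p : β × γ, (∑ᶠ a, c p.2 a * d p.2 a p.1) • u p.2 p.1 := by
  rw [← finsum_comp_equiv (Equiv.prodComm γ α), ← finsum_comp_equiv (Equiv.prodComm γ β)]
  exact finsum_smul_finsum_smul c d u h

theorem finsum_smul_finsum_smul_comm (c : α → R) (d : α → β → R) (u : β → V)
    (h : {t : α × β | c t.1 ≠ 0 ∧ d t.1 t.2 ≠ 0 ∧ u t.2 ≠ 0}.Finite) :
    ∑ᶠ a, c a • ∑ᶠ b, d a b • u b = ∑ᶠ b, (∑ᶠ a, c a * d a b) • u b := by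
  rw [← finsum_comp_equiv (Equiv.punitProd α : Unit × α ≃ α),
    ← finsum_comp_equiv (Equiv.punitProd β : Unit × β ≃ β)]
  exact finsum_smul_finsum_smul (fun _ : Unit => c) (fun _ => d) (fun _ => u)
    (h.preimage (Equiv.punitProd (α × β)).injective.injOn)

end Finsum

/-- Series in `z` and `w / z` whose exponents are bounded below, such as the expansions
`i_{z,w} F(z,w)ⁿ` and `i_{z,w} F(z,ι(w))ⁿ`. The coefficient of `zᵏwˡ = zᵏ⁺ˡ(w/z)ˡ` is stored at
`(k + l, l)`, which makes them Hahn series for the product order. -/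
abbrev ZWSeries (R : Type*) [CommRing R] := HahnSeries (ℤ × ℤ) R

namespace ZWSeries

noncomputable section Basic

variable {R : Type*} [CommRing R]

/-- The coefficient of `zᵏwˡ`. -/
def zwCoeff (x : ZWSeries R) (k l : ℤ) : R := x.coeff (k + l, l)

theorem coeff_eq_zwCoeff (x : ZWSeries R) (p : ℤ × ℤ) :
    x.coeff p = zwCoeff x (p.1 - p.2) p.2 := by
  simp [zwCoeff]

theorem ext_zwCoeff {x y : ZWSeries R} (h : ∀ k l, zwCoeff x k l = zwCoeff y k l) : x = y := by
  ext p
  rw [coeff_eq_zwCoeff, coeff_eq_zwCoeff, h]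

@[simp] theorem zwCoeff_zero (k l : ℤ) : zwCoeff (0 : ZWSeries R) k l = 0 := rfl

@[simp] theorem zwCoeff_add (x y : ZWSeries R) (k l : ℤ) :
    zwCoeff (x + y) k l = zwCoeff x k l + zwCoeff y k l := rfl

@[simp] theorem zwCoeff_sub (x y : ZWSeries R) (k l : ℤ) :
    zwCoeff (x - y) k l = zwCoeff x k l - zwCoeff y k l := rfl

@[simp] theorem zwCoeff_neg (x : ZWSeries R) (k l : ℤ) : zwCoeff (-x) k l = -zwCoeff x k l := rfl

@[simp] theorem zwCoeff_smul (r : R) (x : ZWSeries R) (k l : ℤ) :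
    zwCoeff (r • x) k l = r * zwCoeff x k l := rfl

theorem zwCoeff_one : zwCoeff (1 : ZWSeries R) = oneS2 R := by
  funext k l
  have : ((k + l, l) : ℤ × ℤ) = 0 ↔ k = 0 ∧ l = 0 := by
    rw [Prod.mk_eq_zero]; lia
  simp [zwCoeff, HahnSeries.coeff_one, oneS2, this]

/-- `f` is the family of coefficients of some `ZWSeries`. -/
def IsBounded (f : ℤ → ℤ → R) : Prop := ∃ N : ℤ, ∀ k l, f k l ≠ 0 → N ≤ k + l ∧ N ≤ l

theorem isPWO_of_subset_Ici {s : Set (ℤ × ℤ)} {N : ℤ} (hs : s ⊆ Set.Ici (N, N)) : s.IsPWO :=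
  (bddBelow_Ici.isWF.isPWO.prod bddBelow_Ici.isWF.isPWO).mono
    (hs.trans_eq (Set.Ici_prod_eq (N, N)))

theorem isBounded_zwCoeff (x : ZWSeries R) : IsBounded (zwCoeff x) := by
  have bddBelow {s : Set ℤ} (hs : s.IsPWO) : BddBelow s := by
    rcases s.eq_empty_or_nonempty with rfl | hne
    · exact bddBelow_empty
    · exact ⟨hs.isWF.min hne, fun _ hn => hs.isWF.min_le hne hn⟩
  obtain ⟨a, ha⟩ := bddBelow (x.isPWO_support.image_of_monotone monotone_fst)
  obtain ⟨b, hb⟩ := bddBelow (x.isPWO_support.image_of_monotone monotone_snd)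
  exact ⟨min a b, fun k l h =>
    ⟨(min_le_left a b).trans (ha ⟨_, h, rfl⟩), (min_le_right a b).trans (hb ⟨_, h, rfl⟩)⟩⟩

open Classical in
/-- The series with the given coefficients; `0` if they are not bounded below. -/
def ofCoeff (f : ℤ → ℤ → R) : ZWSeries R :=
  if h : IsBounded f then
    { coeff := fun p => f (p.1 - p.2) p.2
      isPWO_support' := isPWO_of_subset_Ici (N := h.choose) fun p hp => by
        simpa [Prod.le_def] using h.choose_spec _ _ hp }
  else 0

theorem zwCoeff_ofCoeff {f : ℤ → ℤ → R} (hf : IsBounded f) : zwCoeff (ofCoeff f) = f := by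
  funext k l
  simp [zwCoeff, ofCoeff, hf]

theorem IsBounded.finite_mulS2 {f g : ℤ → ℤ → R} (hf : IsBounded f) (hg : IsBounded g) (k l : ℤ) :
    {p : ℤ × ℤ | f p.1 p.2 ≠ 0 ∧ g (k - p.1) (l - p.2) ≠ 0}.Finite := by
  obtain ⟨N, hN⟩ := hf
  obtain ⟨N', hN'⟩ := hg
  refine (Set.finite_Icc ((N - l + N', N) : ℤ × ℤ) (k + l - N' - N, l - N')).subset ?_
  rintro p ⟨hx, hy⟩
  have := hN _ _ hx
  have := hN' _ _ hy
  simp only [Set.mem_Icc, Prod.le_def]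
  lia

theorem zwCoeff_mul (x y : ZWSeries R) : zwCoeff (x * y) = mulS2 (zwCoeff x) (zwCoeff y) := by
  funext k l
  let e : ℤ × ℤ ≃ ℤ × ℤ :=
    ⟨fun p => (p.1 + p.2, p.2), fun p => (p.1 - p.2, p.2), fun _ => by simp, fun _ => by simp⟩
  rw [mulS2, finsum_eq_sum_of_support_subset (s := (Finset.antidiagonal x.isPWO_support
      y.isPWO_support (k + l, l)).image fun q => e.symm q.1), Finset.sum_image]
  · rw [zwCoeff, HahnSeries.coeff_mul]
    refine Finset.sum_congr rfl fun q hq => ?_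
    have hq := (Finset.mem_antidiagonal.1 hq).2.2
    rw [Prod.ext_iff, Prod.fst_add, Prod.snd_add] at hq
    rw [coeff_eq_zwCoeff, coeff_eq_zwCoeff, smul_eq_mul]
    simp only [e, Equiv.coe_fn_symm_mk]
    congr 2 <;> lia
  · intro q hq q' hq' h
    have hq := (Finset.mem_antidiagonal.1 hq).2.2
    have hq' := (Finset.mem_antidiagonal.1 hq').2.2
    have h := e.symm.injective h
    exact Prod.ext h (add_left_cancel (h ▸ hq.trans hq'.symm))
  · intro p hp
    simp only [Finset.coe_image, Set.mem_image, Finset.mem_coe, Finset.mem_antidiagonal]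
    refine ⟨(e p, (k + l, l) - e p), ⟨left_ne_zero_of_smul hp, ?_, add_sub_cancel _ _⟩, by simp⟩
    have h : zwCoeff y (k - p.1) (l - p.2) ≠ 0 := right_ne_zero_of_smul hp
    rw [HahnSeries.mem_support, coeff_eq_zwCoeff]
    convert h using 2
    · simp only [e, Equiv.coe_fn_mk, Prod.mk_sub_mk]
      ring
    · rfl

theorem zwCoeff_pow (x : ZWSeries R) (n : ℕ) : zwCoeff (x ^ n) = pow2 (zwCoeff x) n := by
  induction n with
  | zero => rw [pow_zero, zwCoeff_one, pow2]
  | succ n ih => rw [pow_succ', zwCoeff_mul, ih, pow2]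

theorem exists_of_zwCoeff_mul_ne_zero {x y : ZWSeries R} {k l : ℤ} (h : zwCoeff (x * y) k l ≠ 0) :
    ∃ i j, zwCoeff x i j ≠ 0 ∧ zwCoeff y (k - i) (l - j) ≠ 0 := by
  rw [zwCoeff_mul] at h
  obtain ⟨p, hp⟩ := exists_ne_zero_of_finsum_ne_zero h
  exact ⟨p.1, p.2, left_ne_zero_of_smul hp, right_ne_zero_of_smul hp⟩

end Basic

noncomputable section Monomial

variable (R : Type*) [CommRing R]

/-- The monomial `zⁱwʲ` as a unit. -/
def monomial (i j : ℤ) : (ZWSeries R)ˣ where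
  val := HahnSeries.single (i + j, j) 1
  inv := HahnSeries.single (-(i + j, j)) 1
  val_inv := by rw [HahnSeries.single_mul_single, add_neg_cancel, one_mul]; rfl
  inv_val := by rw [HahnSeries.single_mul_single, neg_add_cancel, one_mul]; rfl

variable {R}

theorem zwCoeff_monomial_mul (i j : ℤ) (x : ZWSeries R) (k l : ℤ) :
    zwCoeff ((monomial R i j : ZWSeries R) * x) k l = zwCoeff x (k - i) (l - j) := by
  change (HahnSeries.single (i + j, j) 1 * x).coeff _ = _
  rw [HahnSeries.coeff_single_mul, one_mul, zwCoeff, Prod.mk_sub_mk, add_sub_add_comm]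

theorem zwCoeff_mul_monomial (x : ZWSeries R) (i j k l : ℤ) :
    zwCoeff (x * (monomial R i j : ZWSeries R)) k l = zwCoeff x (k - i) (l - j) := by
  rw [mul_comm, zwCoeff_monomial_mul]

theorem zwCoeff_monomial (i j k l : ℤ) :
    zwCoeff (monomial R i j : ZWSeries R) k l = if k = i ∧ l = j then 1 else 0 := by
  rw [← mul_one (monomial R i j : ZWSeries R), zwCoeff_monomial_mul, zwCoeff_one, oneS2]
  simp only [sub_eq_zero]

theorem zwCoeff_monomial_sub_monomial :
    zwCoeff (monomial R 1 0 - monomial R 0 1 : ZWSeries R) = zmw R := by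
  funext k l
  rw [zwCoeff_sub, zwCoeff_monomial, zwCoeff_monomial, zmw]
  split_ifs <;> first | lia | simp

theorem monomial_mul_monomial (i j i' j' : ℤ) :
    monomial R i j * monomial R i' j' = monomial R (i + i') (j + j') := by
  refine Units.ext ?_
  change HahnSeries.single _ _ * HahnSeries.single _ _ = HahnSeries.single _ _
  rw [HahnSeries.single_mul_single, Prod.mk_add_mk, one_mul, add_add_add_comm]

theorem monomial_zpow (i j n : ℤ) : monomial R i j ^ n = monomial R (n * i) (n * j) := by
  induction n with
  | zero => rw [zpow_zero, zero_mul, zero_mul]; exact Units.ext rfl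
  | succ n ih => rw [zpow_add_one, ih, monomial_mul_monomial]; congr 1 <;> ring
  | pred n ih =>
    rw [zpow_sub_one, ih, mul_inv_eq_iff_eq_mul, monomial_mul_monomial]; congr 1 <;> ring

end Monomial

section Order

variable {R : Type*} [CommRing R]

/-- `x` is a power series in `z` and `w / z` of order at least `n`: the monomial
`zᵏwˡ = zᵏ⁺ˡ(w/z)ˡ` has degree `k + 2l` in these two variables. -/
def OrderGE (n : ℤ) (x : ZWSeries R) : Prop :=
  ∀ k l, zwCoeff x k l ≠ 0 → 0 ≤ k + l ∧ 0 ≤ l ∧ n ≤ k + 2 * l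

theorem OrderGE.mono {m n : ℤ} (hmn : m ≤ n) {x : ZWSeries R} (hx : OrderGE n x) :
    OrderGE m x := by
  intro k l h
  have := hx _ _ h
  lia

theorem orderGE_zero (n : ℤ) : OrderGE n (0 : ZWSeries R) := fun _ _ h => absurd rfl h

theorem orderGE_one : OrderGE 0 (1 : ZWSeries R) := by
  intro k l h
  rw [zwCoeff_one, oneS2] at h
  have := (ite_ne_right_iff.1 h).1
  lia

theorem one_le_add_two_mul_of_pos {k l : ℤ} (h : 0 < (k, l)) :
    0 ≤ k + l ∧ 0 ≤ l ∧ 1 ≤ k + 2 * l := by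
  obtain ⟨h₁, h₂⟩ | ⟨h₁, h₂⟩ := Prod.lt_iff.1 h <;>
    (simp only [Prod.fst_zero, Prod.snd_zero] at h₁ h₂; lia)

theorem orderGE_monomial_of_pos {v : ℤ × ℤ} (hv : 0 < v) :
    OrderGE 1 (monomial R v.1 v.2 : ZWSeries R) := by
  intro k l h
  rw [zwCoeff_monomial] at h
  obtain ⟨rfl, rfl⟩ := (ite_ne_right_iff.1 h).1
  exact one_le_add_two_mul_of_pos hv

theorem OrderGE.mul {m n : ℤ} {x y : ZWSeries R} (hx : OrderGE m x) (hy : OrderGE n y) :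
    OrderGE (m + n) (x * y) := by
  intro k l h
  obtain ⟨i, j, hi, hj⟩ := exists_of_zwCoeff_mul_ne_zero h
  have := hx _ _ hi
  have := hy _ _ hj
  lia

theorem OrderGE.pow {x : ZWSeries R} (hx : OrderGE 1 x) (n : ℕ) : OrderGE n (x ^ n) := by
  induction n with
  | zero => simpa using orderGE_one
  | succ n ih => rw [pow_succ]; push_cast; exact ih.mul hx

end Order

noncomputable section Sum

variable {R ι κ : Type*} [CommRing R]

/-- Families of series that can be summed coefficientwise. -/
structure IsSummable (f : ι → ZWSeries R) : Prop where
  exists_bound : ∃ N : ℤ, ∀ i k l, zwCoeff (f i) k l ≠ 0 → N ≤ k + l ∧ N ≤ l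
  finite : ∀ k l, {i | zwCoeff (f i) k l ≠ 0}.Finite

/-- The coefficientwise sum of a family of series; it is meaningful for `IsSummable` families. -/
def sum (f : ι → ZWSeries R) : ZWSeries R := ofCoeff fun k l => ∑ᶠ i, zwCoeff (f i) k l

namespace IsSummable

variable {f : ι → ZWSeries R} {g : κ → ZWSeries R}

theorem zwCoeff_sum (hf : IsSummable f) (k l : ℤ) :
    zwCoeff (sum f) k l = ∑ᶠ i, zwCoeff (f i) k l := by
  obtain ⟨N, hN⟩ := hf.exists_bound
  refine congrFun₂ (zwCoeff_ofCoeff ⟨N, fun k l h => ?_⟩) k l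
  obtain ⟨i, hi⟩ := exists_ne_zero_of_finsum_ne_zero h
  exact hN i k l hi

/-- A summable family as one of Mathlib's summable families of Hahn series. -/
def family (hf : IsSummable f) : HahnSeries.SummableFamily (ℤ × ℤ) R ι where
  toFun := f
  isPWO_iUnion_support' := by
    obtain ⟨N, hN⟩ := hf.exists_bound
    refine isPWO_of_subset_Ici (N := N) (Set.iUnion_subset fun i p hp => ?_)
    rw [HahnSeries.mem_support, coeff_eq_zwCoeff] at hp
    simpa [Prod.le_def] using hN i _ _ hp
  finite_co_support' p := by simpa only [coeff_eq_zwCoeff] using hf.finite (p.1 - p.2) p.2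

theorem hsum_family (hf : IsSummable f) : hf.family.hsum = sum f :=
  ext_zwCoeff fun k l => HahnSeries.SummableFamily.coeff_hsum.trans (hf.zwCoeff_sum k l).symm

theorem zwCoeff_mul_sum (hf : IsSummable f) (x : ZWSeries R) (k l : ℤ) :
    zwCoeff (x * sum f) k l = ∑ᶠ i, zwCoeff (x * f i) k l := by
  rw [← hf.hsum_family, ← HahnSeries.SummableFamily.hsum_smul]
  exact HahnSeries.SummableFamily.coeff_hsum

theorem finite_mul (hf : IsSummable f) (hg : IsSummable g) (k l : ℤ) :
    {p : ι × κ | zwCoeff (f p.1 * g p.2) k l ≠ 0}.Finite :=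
  (hf.family.mul hg.family).finite_co_support (k + l, l)

theorem zwCoeff_sum_mul_sum (hf : IsSummable f) (hg : IsSummable g) (k l : ℤ) :
    zwCoeff (sum f * sum g) k l = ∑ᶠ p : ι × κ, zwCoeff (f p.1 * g p.2) k l := by
  rw [← hf.hsum_family, ← hg.hsum_family, ← HahnSeries.SummableFamily.hsum_mul]
  exact HahnSeries.SummableFamily.coeff_hsum

end IsSummable

end Sum

noncomputable section Evaluation

variable {R : Type*} [CommRing R] {e : ℤ → ℤ → ZWSeries R} {f g : ℤ → ℤ → R}

/-- The result of replacing `zⁱwʲ` by `e i j` in the series with coefficients `f`; it is meaningful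
when `IsEvaluable e f`. -/
def evalAt (e : ℤ → ℤ → ZWSeries R) (f : ℤ → ℤ → R) : ZWSeries R :=
  sum fun p : ℤ × ℤ => f p.1 p.2 • e p.1 p.2

/-- The sum defining `evalAt e f` makes sense. -/
abbrev IsEvaluable (e : ℤ → ℤ → ZWSeries R) (f : ℤ → ℤ → R) : Prop :=
  IsSummable fun p : ℤ × ℤ => f p.1 p.2 • e p.1 p.2

theorem IsEvaluable.zwCoeff_evalAt (hf : IsEvaluable e f) (k l : ℤ) :
    zwCoeff (evalAt e f) k l = ∑ᶠ p : ℤ × ℤ, f p.1 p.2 * zwCoeff (e p.1 p.2) k l :=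
  hf.zwCoeff_sum k l

theorem evalAt_congr {e' : ℤ → ℤ → ZWSeries R} (h : ∀ i j, f i j ≠ 0 → e i j = e' i j) :
    evalAt e f = evalAt e' f := by
  unfold evalAt
  congr 1
  funext p
  by_cases hp : f p.1 p.2 = 0
  · rw [hp, zero_smul, zero_smul]
  · rw [h _ _ hp]

theorem IsEvaluable.evalAt_monomial {i j : ℤ}
    (h : IsEvaluable e (zwCoeff (monomial R i j : ZWSeries R))) :
    evalAt e (zwCoeff (monomial R i j : ZWSeries R)) = e i j := by
  refine ext_zwCoeff fun k l => ?_
  rw [h.zwCoeff_evalAt, finsum_eq_single _ (i, j)]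
  · simp [zwCoeff_monomial]
  · intro p hp
    rw [zwCoeff_monomial, if_neg fun h => hp (Prod.ext h.1 h.2), zero_mul]

theorem IsEvaluable.evalAt_add (hf : IsEvaluable e f) (hg : IsEvaluable e g)
    (hfg : IsEvaluable e (f + g)) : evalAt e (f + g) = evalAt e f + evalAt e g := by
  refine ext_zwCoeff fun k l => ?_
  rw [zwCoeff_add, hfg.zwCoeff_evalAt, hf.zwCoeff_evalAt, hg.zwCoeff_evalAt]
  exact (finsum_congr fun p => add_mul _ _ _).trans
    (finsum_add_distrib (hf.finite k l) (hg.finite k l))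

theorem IsEvaluable.evalAt_mulS2 (hf : IsEvaluable e f) (hg : IsEvaluable e g)
    (hfg : IsEvaluable e (mulS2 f g)) (hf' : IsBounded f) (hg' : IsBounded g)
    (he : ∀ i j i' j', f i j ≠ 0 → g i' j' ≠ 0 → e (i + i') (j + j') = e i j * e i' j') :
    evalAt e (mulS2 f g) = evalAt e f * evalAt e g := by
  refine ext_zwCoeff fun k l => ?_
  let E (p : ℤ × ℤ) : R := zwCoeff (e p.1 p.2) k l
  let c (t : (ℤ × ℤ) × ℤ × ℤ) : R := f t.1.1 t.1.2 * g t.2.1 t.2.2 * E (t.1 + t.2)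
  have hc (t : (ℤ × ℤ) × ℤ × ℤ) :
      zwCoeff ((f t.1.1 t.1.2 • e t.1.1 t.1.2) * (g t.2.1 t.2.2 • e t.2.1 t.2.2)) k l = c t := by
    simp only [c]
    by_cases h₁ : f t.1.1 t.1.2 = 0
    · simp [h₁]
    by_cases h₂ : g t.2.1 t.2.2 = 0
    · simp [h₂]
    rw [smul_mul_smul_comm, zwCoeff_smul, ← he _ _ _ _ h₁ h₂]
    rfl
  let φ : (ℤ × ℤ) × ℤ × ℤ ≃ (ℤ × ℤ) × ℤ × ℤ :=
    ⟨fun t => (t.2, t.1 - t.2), fun t => (t.1 + t.2, t.1), fun t => by simp, fun t => by simp⟩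
  have hfin : c.support.Finite := by
    simpa only [Function.support, hc] using hf.finite_mul hg k l
  calc zwCoeff (evalAt e (mulS2 f g)) k l
      = ∑ᶠ r : ℤ × ℤ, (∑ᶠ p : ℤ × ℤ, f p.1 p.2 * g (r.1 - p.1) (r.2 - p.2)) * E r :=
        hfg.zwCoeff_evalAt k l
    _ = ∑ᶠ r : ℤ × ℤ, ∑ᶠ p : ℤ × ℤ, c (φ (r, p)) := finsum_congr fun r => by
        rw [finsum_mul' _ _ ((hf'.finite_mulS2 hg' r.1 r.2).subset fun p hp =>
          ⟨left_ne_zero_of_mul hp, right_ne_zero_of_mul hp⟩)]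
        simp [c, φ]
    _ = ∑ᶠ t, c (φ t) := (finsum_curry _ (hfin.preimage φ.injective.injOn)).symm
    _ = ∑ᶠ t, c t := finsum_comp_equiv φ
    _ = zwCoeff (evalAt e f * evalAt e g) k l := by
        rw [evalAt, evalAt, hf.zwCoeff_sum_mul_sum hg]
        exact (finsum_congr hc).symm

end Evaluation

section Binomial

theorem zbinom_eq_choose (n : ℤ) (m : ℕ) : zbinom n m = Ring.choose n m := by
  unfold zbinom
  split_ifs with hn
  · lift n to ℕ using hn
    rw [Int.toNat_natCast, Ring.choose_natCast]
  · obtain ⟨t, rfl⟩ : ∃ t : ℕ, n = -(t + 1) := ⟨(-n - 1).toNat, by lia⟩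
    rw [Ring.choose_neg, show ((m : ℤ) - -(t + 1) - 1).toNat = t + m by lia,
      show ((t + 1 : ℤ) + m - 1) = (t + m : ℕ) by push_cast; ring, Ring.choose_natCast,
      Units.smul_def, Int.coe_negOnePow_natCast, smul_eq_mul]

end Binomial

noncomputable section Newton

variable {R : Type*} [CommRing R]

/-- The binomial expansion of `(1 + H)ⁿ`. -/
def newton (H : ZWSeries R) (n : ℤ) : ZWSeries R := sum fun m : ℕ => (zbinom n m : R) • H ^ m

variable {H : ZWSeries R} (hH : OrderGE 1 H)
include hH

theorem OrderGE.isSummable_smul_pow (c : ℕ → R) : IsSummable fun m : ℕ => c m • H ^ m where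
  exists_bound := ⟨0, fun m k l h => by
    have := hH.pow m _ _ (right_ne_zero_of_mul h)
    lia⟩
  finite k l := (Set.finite_Iic (k + 2 * l).toNat).subset fun m h => by
    have := hH.pow m _ _ (right_ne_zero_of_mul h)
    rw [Set.mem_Iic]
    lia

theorem zwCoeff_newton (n k l : ℤ) :
    zwCoeff (newton H n) k l = ∑ᶠ m : ℕ, (zbinom n m : R) * zwCoeff (H ^ m) k l :=
  (hH.isSummable_smul_pow _).zwCoeff_sum k l

theorem newton_zero : newton H 0 = 1 := by
  refine ext_zwCoeff fun k l => ?_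
  rw [zwCoeff_newton hH, finsum_eq_single _ 0]
  · simp [zbinom_eq_choose]
  · intro m hm
    simp [zbinom_eq_choose, Ring.choose_zero_pos ℤ (Nat.pos_of_ne_zero hm)]

theorem newton_add_one (n : ℤ) : newton H (n + 1) = (1 + H) * newton H n := by
  refine ext_zwCoeff fun k l => ?_
  have hfin (c : ℕ → R) : (fun m => c m * zwCoeff (H ^ m) k l).support.Finite :=
    (hH.isSummable_smul_pow c).finite k l
  have hfin' (c : ℕ → R) : (fun m => c m * zwCoeff (H ^ (m + 1)) k l).support.Finite :=
    ((hfin 1).preimage (add_left_injective 1).injOn).subset fun m h => by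
      simpa using right_ne_zero_of_mul h
  have hmul : zwCoeff (H * newton H n) k l =
      ∑ᶠ m : ℕ, (zbinom n m : R) * zwCoeff (H ^ (m + 1)) k l := by
    rw [newton, (hH.isSummable_smul_pow _).zwCoeff_mul_sum]
    exact finsum_congr fun m => by rw [mul_smul_comm, ← pow_succ', zwCoeff_smul]
  calc zwCoeff (newton H (n + 1)) k l
      = ∑ᶠ m : ℕ, (zbinom (n + 1) m : R) * zwCoeff (H ^ m) k l := zwCoeff_newton hH _ _ _
    _ = zwCoeff 1 k l + ∑ᶠ m : ℕ, (zbinom (n + 1) (m + 1) : R) * zwCoeff (H ^ (m + 1)) k l := by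
        rw [finsum_nat_eq_zero_add (hfin _)]
        simp [zbinom_eq_choose]
    _ = (zwCoeff 1 k l + ∑ᶠ m : ℕ, (zbinom n (m + 1) : R) * zwCoeff (H ^ (m + 1)) k l) +
          ∑ᶠ m : ℕ, (zbinom n m : R) * zwCoeff (H ^ (m + 1)) k l := by
        rw [add_assoc, ← finsum_add_distrib (hfin' _) (hfin' _)]
        simp only [zbinom_eq_choose, Ring.choose_succ_succ, Int.cast_add, add_mul, add_comm]
    _ = zwCoeff (newton H n) k l + zwCoeff (H * newton H n) k l := by
        rw [hmul, zwCoeff_newton hH, finsum_nat_eq_zero_add (hfin _)]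
        simp [zbinom_eq_choose]
    _ = zwCoeff ((1 + H) * newton H n) k l := by rw [add_mul, one_mul, zwCoeff_add]

/-- The unit `1 + H`. -/
def oneAddUnit : (ZWSeries R)ˣ where
  val := 1 + H
  inv := newton H (-1)
  val_inv := by rw [← newton_add_one hH, neg_add_cancel, newton_zero hH]
  inv_val := by rw [mul_comm, ← newton_add_one hH, neg_add_cancel, newton_zero hH]

theorem val_oneAddUnit_zpow (n : ℤ) :
    ((oneAddUnit hH ^ n : (ZWSeries R)ˣ) : ZWSeries R) = newton H n := by
  induction n with
  | zero => rw [zpow_zero, newton_zero hH, Units.val_one]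
  | succ n ih => rw [zpow_add_one, Units.val_mul, ih, newton_add_one hH, mul_comm]; rfl
  | pred n ih =>
    have h := newton_add_one hH (-n - 1)
    rw [sub_add_cancel, ← ih] at h
    rw [zpow_sub_one, Units.val_mul, h, mul_comm]
    exact (oneAddUnit hH).inv_mul_cancel_left _

theorem zwCoeff_monomial_mul_oneAddUnit_zpow (i j n k l : ℤ) :
    zwCoeff (((monomial R i j * oneAddUnit hH) ^ n : (ZWSeries R)ˣ) : ZWSeries R) k l =
      ∑ᶠ m : ℕ, (zbinom n m : R) * zwCoeff (H ^ m) (k - n * i) (l - n * j) := by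
  rw [mul_zpow, monomial_zpow, Units.val_mul, zwCoeff_monomial_mul, val_oneAddUnit_zpow,
    zwCoeff_newton hH]

theorem zwCoeff_neg_monomial_mul_oneAddUnit_zpow (i j n k l : ℤ) :
    zwCoeff (((-(monomial R i j * oneAddUnit hH)) ^ n : (ZWSeries R)ˣ) : ZWSeries R) k l =
      (msign n : R) *
        ∑ᶠ m : ℕ, (zbinom n m : R) * zwCoeff (H ^ m) (k - n * i) (l - n * j) := by
  rw [← zwCoeff_monomial_mul_oneAddUnit_zpow hH]
  rcases Int.even_or_odd n with h | h
  · simp [h.neg_zpow, msign, h]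
  · simp [h.neg_zpow, msign, Int.not_even_iff_odd.2 h]

end Newton

section PowerSeries

variable {R M : Type*} [CommRing R] [AddCommGroup M] [Module R M]

/-- `f` involves no negative powers. -/
def IsPowerSeries (f : ℤ → ℤ → R) : Prop := ∀ i j, f i j ≠ 0 → 0 ≤ i ∧ 0 ≤ j

theorem IsPowerSeries.isBounded {f : ℤ → ℤ → R} (hf : IsPowerSeries f) : IsBounded f :=
  ⟨0, fun k l h => by have := hf k l h; lia⟩

theorem isPowerSeries_oneS2 : IsPowerSeries (oneS2 R) := by
  intro i j h
  have := (ite_ne_right_iff.1 h).1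
  lia

theorem IsPowerSeries.mulS2 {f g : ℤ → ℤ → R} (hf : IsPowerSeries f) (hg : IsPowerSeries g) :
    IsPowerSeries (mulS2 f g) := by
  intro i j h
  obtain ⟨p, hp⟩ := exists_ne_zero_of_finsum_ne_zero h
  have := hf _ _ (left_ne_zero_of_smul hp)
  have := hg _ _ (right_ne_zero_of_smul hp)
  lia

theorem IsPowerSeries.pow2 {f : ℤ → ℤ → R} (hf : IsPowerSeries f) (m : ℕ) :
    IsPowerSeries (pow2 f m) := by
  induction m with
  | zero => exact isPowerSeries_oneS2
  | succ m ih => exact hf.mulS2 ih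

/-- The series `f(z^v₁ w^v₂)`. -/
noncomputable def inMonomial (v : ℤ × ℤ) (f : ℤ → R) : ℤ → ℤ → R :=
  fun k l => Function.extend (· • v) f 0 (k, l)

variable {v : ℤ × ℤ}

theorem exists_of_inMonomial_ne_zero {f : ℤ → R} {k l : ℤ} (h : inMonomial v f k l ≠ 0) :
    ∃ n : ℤ, n • v = (k, l) := by
  by_contra h'
  exact h (Function.extend_apply' _ _ _ h')

variable (hv : v ≠ 0)
include hv

theorem inMonomial_smul (f : ℤ → R) (n : ℤ) : inMonomial v f (n • v).1 (n • v).2 = f n :=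
  (smul_left_injective ℤ hv).extend_apply _ _ _

theorem finsum_inMonomial_smul (f : ℤ → R) (u : ℤ × ℤ → M) :
    ∑ᶠ p : ℤ × ℤ, inMonomial v f p.1 p.2 • u p = ∑ᶠ n : ℤ, f n • u (n • v) := by
  rw [← finsum_comp_of_support_subset_range _ (smul_left_injective ℤ hv)]
  · simp only [inMonomial_smul hv]
  · exact fun p hp => exists_of_inMonomial_ne_zero (left_ne_zero_of_smul hp)

theorem mulS2_inMonomial (f : ℤ → R) (g : ℤ → ℤ → M) (k l : ℤ) :
    mulS2 (inMonomial v f) g k l = ∑ᶠ n : ℤ, f n • g (k - n * v.1) (l - n * v.2) :=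
  finsum_inMonomial_smul hv f fun p => g (k - p.1) (l - p.2)

theorem inMonomial_eq_apply_or_eq_zero (k l : ℤ) :
    (∃ m, ∀ f : ℤ → R, inMonomial v f k l = f m) ∨ ∀ f : ℤ → R, inMonomial v f k l = 0 := by
  by_cases h : ∃ m : ℤ, m • v = (k, l)
  · obtain ⟨m, hm⟩ := h
    obtain ⟨rfl, rfl⟩ := Prod.ext_iff.1 hm
    exact .inl ⟨m, fun f => inMonomial_smul hv f m⟩
  · exact .inr fun f => Function.extend_apply' _ _ _ h

theorem inMonomial_sub (f : ℤ → R) (n k l : ℤ) :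
    inMonomial v f (k - n * v.1) (l - n * v.2) = inMonomial v (fun m => f (m - n)) k l := by
  have hsub : ((k - n * v.1, l - n * v.2) : ℤ × ℤ) = (k, l) - n • v := rfl
  by_cases h : ∃ m : ℤ, m • v = (k, l)
  · obtain ⟨m, hm⟩ := h
    obtain ⟨rfl, rfl⟩ := Prod.ext_iff.1 hm
    rw [inMonomial_smul hv, ← inMonomial_smul hv f, sub_smul]
    rfl
  · rw [inMonomial, inMonomial, Function.extend_apply' _ _ _ h, hsub, Function.extend_apply']
    · rfl
    · rintro ⟨m, hm⟩
      exact h ⟨m + n, by rw [add_smul, hm, sub_add_cancel]⟩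

theorem mulS2_inMonomial_inMonomial (f g : ℤ → R) :
    mulS2 (inMonomial v f) (inMonomial v g) = inMonomial v (mulS f g) := by
  funext k l
  simp only [mulS2_inMonomial hv, inMonomial_sub hv]
  obtain ⟨m, hm⟩ | h₀ := inMonomial_eq_apply_or_eq_zero (R := R) hv k l
  · simp only [hm, mulS]
  · simp only [h₀, smul_zero, finsum_zero]

theorem inMonomial_oneS : inMonomial v (oneS R) = oneS2 R := by
  funext k l
  by_cases h : k = 0 ∧ l = 0
  · obtain ⟨rfl, rfl⟩ := h
    simpa [oneS, oneS2] using inMonomial_smul hv (oneS R) 0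
  · by_contra h'
    rw [oneS2, if_neg h] at h'
    obtain ⟨n, hn⟩ := exists_of_inMonomial_ne_zero h'
    obtain ⟨rfl, rfl⟩ := Prod.ext_iff.1 hn
    rw [inMonomial_smul hv] at h'
    exact h (by simp [(ite_ne_right_iff.1 h').1])

theorem pow2_inMonomial (f : ℤ → R) (m : ℕ) :
    pow2 (inMonomial v f) m = inMonomial v (pow1 f m) := by
  induction m with
  | zero => exact (inMonomial_oneS hv).symm
  | succ m ih => rw [pow2, ih, mulS2_inMonomial_inMonomial hv, pow1]

omit hv

theorem inMonomial_one_zero (f : ℤ → R) (k l : ℤ) :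
    inMonomial (1, 0) f k l = if l = 0 then f k else 0 := by
  split_ifs with hl
  · simpa [hl] using inMonomial_smul (v := (1, 0)) (by simp) f k
  · by_contra h
    obtain ⟨n, hn⟩ := exists_of_inMonomial_ne_zero h
    exact hl (by simpa using (Prod.ext_iff.1 hn).2.symm)

theorem inMonomial_zero_one (f : ℤ → R) (k l : ℤ) :
    inMonomial (0, 1) f k l = if k = 0 then f l else 0 := by
  split_ifs with hk
  · simpa [hk] using inMonomial_smul (v := (0, 1)) (by simp) f l
  · by_contra h
    obtain ⟨n, hn⟩ := exists_of_inMonomial_ne_zero h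
    exact hk (by simpa using (Prod.ext_iff.1 hn).1.symm)

end PowerSeries

section LocallyFinite

variable {R V : Type*} [CommRing R] [AddCommGroup V] [Module R V]

theorem exists_le_of_isLaurent {g : ℤ → V} (hg : IsLaurent g) : ∃ N, ∀ n, g n ≠ 0 → N ≤ n := by
  obtain ⟨N, hN⟩ := hg
  exact ⟨N, fun n h => not_lt.1 fun hn => h (hN n hn)⟩

theorem isLaurent_of_le {g : ℤ → V} {N : ℤ} (hN : ∀ n, g n ≠ 0 → N ≤ n) : IsLaurent g :=
  ⟨N, fun n hn => by_contra fun h => hn.not_ge (hN n h)⟩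

theorem exists_le_of_forall_isLaurent {f : ℤ → ℤ → V} (hf : ∀ q, IsLaurent (f q)) (a b : ℤ) :
    ∃ K, ∀ q m, a ≤ q → q ≤ b → f q m ≠ 0 → K ≤ m := by
  choose N hN using fun q => exists_le_of_isLaurent (hf q)
  obtain ⟨K, hK⟩ := ((Set.finite_Icc a b).image N).bddBelow
  exact ⟨K, fun q m ha hb h => (hK ⟨q, ⟨ha, hb⟩, rfl⟩).trans (hN q m h)⟩

/-- The support of `G` meets every quadrant that is bounded above in a finite set, so that `G` can
be multiplied by power series. -/
def IsLocallyFinite (G : ℤ → ℤ → V) : Prop :=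
  ∀ k l, ∃ K, ∀ k' ≤ k, ∀ l' ≤ l, G k' l' ≠ 0 → K ≤ k' ∧ K ≤ l'

theorem isLocallyFinite_of_isLaurent {f : ℤ → ℤ → V} (hf : ∀ q, IsLaurent (f q)) {D : ℤ}
    (hD : ∀ q m, f q m ≠ 0 → D ≤ q) : IsLocallyFinite f := by
  intro k l
  obtain ⟨K, hK⟩ := exists_le_of_forall_isLaurent hf D k
  refine ⟨min D K, fun k' hk l' _ h => ?_⟩
  have hDk := hD _ _ h
  have hKl := hK _ _ hDk hk h
  lia

namespace IsLocallyFinite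

variable {G : ℤ → ℤ → V} (hG : IsLocallyFinite G)
include hG

theorem swap : IsLocallyFinite fun k l => G l k := by
  intro k l
  obtain ⟨K, hK⟩ := hG l k
  exact ⟨K, fun k' hk l' hl h => (hK l' hl k' hk h).symm⟩

theorem isLaurent (k : ℤ) : IsLaurent (G k) := by
  obtain ⟨K, hK⟩ := hG k 0
  refine isLaurent_of_le (N := min K 0) fun l h => ?_
  by_cases hl : l ≤ 0
  · exact (min_le_left _ _).trans (hK k le_rfl l hl h).2
  · exact (min_le_right _ _).trans (not_le.1 hl).le

end IsLocallyFinite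

theorem mulS_eq_finsum_sub_smul (f : ℤ → R) (g : ℤ → V) (n : ℤ) :
    mulS f g n = ∑ᶠ i, f (n - i) • g i := by
  rw [mulS, ← finsum_comp_equiv (Equiv.subLeft n)]
  simp only [Equiv.subLeft_apply, sub_sub_cancel]

theorem mulS2_assoc {f g : ℤ → ℤ → R} {G : ℤ → ℤ → V} (hf : IsPowerSeries f)
    (hg : IsPowerSeries g) (hG : IsLocallyFinite G) :
    mulS2 f (mulS2 g G) = mulS2 (mulS2 f g) G := by
  funext k l
  have hshift (p : ℤ × ℤ) : mulS2 g G (k - p.1) (l - p.2) =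
      ∑ᶠ q : ℤ × ℤ, g (q.1 - p.1) (q.2 - p.2) • G (k - q.1) (l - q.2) := by
    rw [mulS2, ← finsum_comp_equiv (Equiv.subRight p)]
    simp only [Equiv.subRight_apply, Prod.fst_sub, Prod.snd_sub, sub_sub_sub_cancel_right]
  obtain ⟨K, hK⟩ := hG k l
  rw [mulS2]
  simp only [hshift]
  refine finsum_smul_finsum_smul_comm (fun p : ℤ × ℤ => f p.1 p.2) _ _ <|
    (Set.finite_Icc (((0, 0), (0, 0)) : (ℤ × ℤ) × ℤ × ℤ) ((k - K, l - K), (k - K, l - K))).subset ?_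
  rintro ⟨⟨i, j⟩, i', j'⟩ ⟨h₁, h₂, h₃⟩
  have h₁ := hf _ _ h₁
  have h₂ := hg _ _ h₂
  have h₃ := hK (k - i') (by lia) (l - j') (by lia) h₃
  simp only [Set.mem_Icc, Prod.le_def]
  lia

theorem mulS2_eq_finsum_mulS {f : ℤ → ℤ → R} {G : ℤ → ℤ → V} (hf : IsPowerSeries f)
    (hG : IsLocallyFinite G) (k l : ℤ) :
    mulS2 f G k l = ∑ᶠ i, mulS (f i) (G (k - i)) l := by
  obtain ⟨K, hK⟩ := hG k l
  refine finsum_curry _ <| (Set.finite_Icc ((0, 0) : ℤ × ℤ) (k - K, l - K)).subset ?_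
  rintro ⟨i, j⟩ h
  have h₁ := hf _ _ (left_ne_zero_of_smul h)
  have h₂ := hK (k - i) (by lia) (l - j) (by lia) (right_ne_zero_of_smul h)
  simp only [Set.mem_Icc, Prod.le_def]
  lia

theorem mulS2_swap (f : ℤ → ℤ → R) (g : ℤ → ℤ → V) (k l : ℤ) :
    mulS2 (fun i j => f j i) (fun i j => g j i) k l = mulS2 f g l k := by
  rw [mulS2, ← finsum_comp_equiv (Equiv.prodComm ℤ ℤ)]
  rfl

theorem pow2_swap (f : ℤ → ℤ → R) (m : ℕ) (k l : ℤ) :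
    pow2 (fun i j => f j i) m k l = pow2 f m l k := by
  induction m generalizing k l with
  | zero => simp only [pow2, oneS2, and_comm]
  | succ m ih =>
    rw [pow2, pow2, ← mulS2_swap, funext₂ ih]

end LocallyFinite

noncomputable section Units

variable {R : Type*} [CommRing R]

/-- `G = z + O(w)`, so that the powers `izwPow G n` make sense. -/
structure IsZModW (G : ℤ → ℤ → R) : Prop where
  isPowerSeries : IsPowerSeries G
  mod_w : ∀ i, G i 0 = if i = 1 then 1 else 0

section ZModW

variable {G : ℤ → ℤ → R} (hG : IsZModW G)
include hG

theorem IsZModW.isBounded_hzS : IsBounded (hzS G) :=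
  ⟨-1, fun k l h => by
    by_cases h₀ : oneS2 R k l = 0
    · rw [hzS, h₀, sub_zero] at h
      have := hG.isPowerSeries _ _ h
      lia
    · have := isPowerSeries_oneS2 _ _ h₀
      lia⟩

theorem IsZModW.orderGE_hzS : OrderGE 1 (ofCoeff (hzS G)) := by
  intro k l h
  rw [zwCoeff_ofCoeff hG.isBounded_hzS, hzS] at h
  have hl : l ≠ 0 := by
    rintro rfl
    simp [hG.mod_w, oneS2] at h
  rw [oneS2, if_neg fun h₀ => hl h₀.2, sub_zero] at h
  have := hG.isPowerSeries _ _ h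
  lia

/-- The series `G = z + O(w)` as a unit. -/
def zUnit : (ZWSeries R)ˣ := monomial R 1 0 * oneAddUnit hG.orderGE_hzS

theorem zwCoeff_zUnit : zwCoeff (zUnit hG : ZWSeries R) = G := by
  funext k l
  rw [zUnit, Units.val_mul, zwCoeff_monomial_mul, oneAddUnit, zwCoeff_add, zwCoeff_one,
    zwCoeff_ofCoeff hG.isBounded_hzS, hzS]
  simp

theorem zwCoeff_zUnit_zpow (n : ℤ) :
    zwCoeff ((zUnit hG ^ n : (ZWSeries R)ˣ) : ZWSeries R) = izwPow G n := by
  funext k l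
  rw [zUnit, zwCoeff_monomial_mul_oneAddUnit_zpow]
  simp [izwPow, zwCoeff_pow, zwCoeff_ofCoeff hG.isBounded_hzS]

theorem izwPow_natCast (n : ℕ) : izwPow G n = pow2 G n := by
  rw [← zwCoeff_zUnit_zpow hG, zpow_natCast, Units.val_pow_eq_pow_val, zwCoeff_pow,
    zwCoeff_zUnit]

theorem le_of_izwPow_ne_zero {n k l : ℤ} (h : izwPow G n k l ≠ 0) : n ≤ k + l ∧ 0 ≤ l := by
  obtain ⟨m, hm⟩ := exists_ne_zero_of_finsum_ne_zero h
  rw [← zwCoeff_ofCoeff hG.isBounded_hzS, ← zwCoeff_pow] at hm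
  have := hG.orderGE_hzS.pow m _ _ (right_ne_zero_of_mul hm)
  lia

theorem IsZModW.isLaurent_izwPow (n k : ℤ) : IsLaurent (izwPow G n k) :=
  isLaurent_of_le fun _ h => (le_of_izwPow_ne_zero hG h).2

end ZModW

/-- `f(z) = -z + O(z²)`, so that the powers `iotaPow f n` make sense. -/
structure IsNegZ (f : ℤ → R) : Prop where
  eq_zero : ∀ n < 1, f n = 0
  one : f 1 = -1

theorem one_zero_pos : (0 : ℤ × ℤ) < (1, 0) := Prod.lt_iff.2 (.inl ⟨zero_lt_one, le_rfl⟩)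

theorem zero_one_pos : (0 : ℤ × ℤ) < (0, 1) := Prod.lt_iff.2 (.inr ⟨le_rfl, zero_lt_one⟩)

section NegZ

variable {f : ℤ → R} (hf : IsNegZ f)
include hf

theorem IsNegZ.hS_eq_zero {n : ℤ} (hn : n ≤ 0) : hS f n = 0 := by
  rcases hn.lt_or_eq with hn | rfl
  · simp [hS, oneS, hf.eq_zero (n + 1) (by lia), hn.ne]
  · simp [hS, oneS, hf.one]

variable {v : ℤ × ℤ} (hv : 0 < v)
include hv

theorem IsNegZ.pos_of_inMonomial_hS_ne_zero {k l : ℤ} (h : inMonomial v (hS f) k l ≠ 0) :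
    0 < (k, l) := by
  obtain ⟨n, hn⟩ := exists_of_inMonomial_ne_zero h
  rw [← hn]
  obtain ⟨rfl, rfl⟩ := Prod.ext_iff.1 hn
  rw [inMonomial_smul hv.ne'] at h
  exact smul_pos (not_le.1 fun h' => h (hf.hS_eq_zero h')) hv

theorem IsNegZ.isBounded_inMonomial_hS : IsBounded (inMonomial v (hS f)) :=
  ⟨0, fun k l h => by
    have := Prod.le_def.1 (hf.pos_of_inMonomial_hS_ne_zero hv h).le
    exact ⟨add_nonneg this.1 this.2, this.2⟩⟩

theorem IsNegZ.orderGE_inMonomial_hS : OrderGE 1 (ofCoeff (inMonomial v (hS f))) := by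
  intro k l h
  rw [zwCoeff_ofCoeff (hf.isBounded_inMonomial_hS hv)] at h
  exact one_le_add_two_mul_of_pos (hf.pos_of_inMonomial_hS_ne_zero hv h)

/-- The series `f(zⁱwʲ)`, for `f(z) = -z + O(z²)` and `v = (i, j)`, as a unit. -/
def negUnit : (ZWSeries R)ˣ :=
  -(monomial R v.1 v.2 * oneAddUnit (hf.orderGE_inMonomial_hS hv))

theorem zwCoeff_negUnit_zpow (n : ℤ) :
    zwCoeff ((negUnit hf hv ^ n : (ZWSeries R)ˣ) : ZWSeries R) = inMonomial v (iotaPow f n) := by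
  have hv' := hv.ne'
  funext k l
  rw [negUnit, zwCoeff_neg_monomial_mul_oneAddUnit_zpow]
  simp only [zwCoeff_pow, zwCoeff_ofCoeff (hf.isBounded_inMonomial_hS hv), pow2_inMonomial hv']
  simp only [inMonomial_sub hv']
  obtain ⟨m, hm⟩ | h₀ := inMonomial_eq_apply_or_eq_zero (R := R) hv' k l
  · simp only [hm, iotaPow]
  · simp only [h₀, mul_zero, finsum_zero]

theorem zwCoeff_negUnit : zwCoeff (negUnit hf hv : ZWSeries R) = inMonomial v f := by
  have hv' := hv.ne'
  funext k l
  rw [negUnit, Units.val_neg, zwCoeff_neg, Units.val_mul, zwCoeff_monomial_mul, oneAddUnit,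
    zwCoeff_add, zwCoeff_one, zwCoeff_ofCoeff (hf.isBounded_inMonomial_hS hv),
    ← inMonomial_oneS hv']
  have hsub := fun g : ℤ → R => inMonomial_sub hv' g 1 k l
  simp only [one_mul] at hsub
  rw [hsub, hsub]
  obtain ⟨m, hm⟩ | h₀ := inMonomial_eq_apply_or_eq_zero (R := R) hv' k l
  · simp [hm, hS]
  · simp [h₀]

omit hv

theorem le_of_iotaPow_ne_zero {n k : ℤ} (h : iotaPow f n k ≠ 0) : n ≤ k := by
  obtain ⟨m, hm⟩ := exists_ne_zero_of_finsum_ne_zero (right_ne_zero_of_mul h)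
  have hv := one_zero_pos
  have hm' : zwCoeff (ofCoeff (inMonomial (1, 0) (hS f)) ^ m) (k - n) 0 ≠ 0 := by
    rw [zwCoeff_pow, zwCoeff_ofCoeff (hf.isBounded_inMonomial_hS hv), pow2_inMonomial hv.ne',
      inMonomial_one_zero, if_pos rfl]
    exact right_ne_zero_of_mul hm
  have := (hf.orderGE_inMonomial_hS hv).pow m _ _ hm'
  lia

theorem mulS_iotaPow (m n : ℤ) : mulS (iotaPow f m) (iotaPow f n) = iotaPow f (m + n) := by
  have hv := one_zero_pos
  have h : inMonomial (1, 0) (mulS (iotaPow f m) (iotaPow f n)) =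
      inMonomial (1, 0) (iotaPow f (m + n)) := by
    rw [← zwCoeff_negUnit_zpow hf hv, zpow_add, Units.val_mul, zwCoeff_mul, zwCoeff_negUnit_zpow,
      zwCoeff_negUnit_zpow, mulS2_inMonomial_inMonomial hv.ne']
  funext k
  simpa [inMonomial_one_zero] using congrFun₂ h k 0

theorem iotaPow_natCast (n : ℕ) : iotaPow f n = pow1 f n := by
  have hv := one_zero_pos
  have h : inMonomial (1, 0) (iotaPow f n) = inMonomial (1, 0) (pow1 f n) := by
    rw [← zwCoeff_negUnit_zpow hf hv, zpow_natCast, Units.val_pow_eq_pow_val, zwCoeff_pow,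
      zwCoeff_negUnit, pow2_inMonomial hv.ne']
  funext k
  simpa [inMonomial_one_zero] using congrFun₂ h k 0

end NegZ

end Units

noncomputable section Substitution

variable {R : Type*} [CommRing R]

/-- The family `XⁱYʲ` for nonnegative exponents. -/
def natPowers (X Y : ZWSeries R) (i j : ℤ) : ZWSeries R := X ^ i.toNat * Y ^ j.toNat

/-- The substitution `f(X, Y)` for a power series `f` and `X`, `Y` of positive order. -/
def subst (X Y : ZWSeries R) (f : ℤ → ℤ → R) : ZWSeries R := evalAt (natPowers X Y) f

section Subst

variable {X Y : ZWSeries R} (hX : OrderGE 1 X) (hY : OrderGE 1 Y) {f g : ℤ → ℤ → R}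
  (hf : IsPowerSeries f)
include hX hY

theorem orderGE_natPowers (i j : ℤ) : OrderGE (i + j) (natPowers X Y i j) :=
  ((hX.pow _).mul (hY.pow _)).mono (by lia)

include hf

theorem IsPowerSeries.isEvaluable : IsEvaluable (natPowers X Y) f where
  exists_bound := ⟨0, fun p k l h => by
    have := orderGE_natPowers hX hY _ _ _ _ (right_ne_zero_of_mul h)
    lia⟩
  finite k l := by
    refine ((Set.finite_Icc 0 (k + 2 * l)).prod (Set.finite_Icc 0 (k + 2 * l))).subset fun p h => ?_
    have := orderGE_natPowers hX hY _ _ _ _ (right_ne_zero_of_mul h)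
    have := hf _ _ (left_ne_zero_of_mul h)
    simp only [Set.mem_prod, Set.mem_Icc]
    lia

theorem zwCoeff_subst (k l : ℤ) :
    zwCoeff (subst X Y f) k l = ∑ᶠ p : ℤ × ℤ, f p.1 p.2 * zwCoeff (natPowers X Y p.1 p.2) k l :=
  (hf.isEvaluable hX hY).zwCoeff_evalAt k l

theorem orderGE_subst (h₀ : f 0 0 = 0) : OrderGE 1 (subst X Y f) := by
  intro k l h
  rw [zwCoeff_subst hX hY hf] at h
  obtain ⟨p, hp⟩ := exists_ne_zero_of_finsum_ne_zero h
  have := orderGE_natPowers hX hY _ _ _ _ (right_ne_zero_of_mul hp)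
  have := hf _ _ (left_ne_zero_of_mul hp)
  have : ¬(p.1 = 0 ∧ p.2 = 0) := fun h => left_ne_zero_of_mul hp (by rw [h.1, h.2, h₀])
  lia

theorem subst_mulS2 (hg : IsPowerSeries g) :
    subst X Y (mulS2 f g) = subst X Y f * subst X Y g :=
  (hf.isEvaluable hX hY).evalAt_mulS2 (hg.isEvaluable hX hY) ((hf.mulS2 hg).isEvaluable hX hY)
    hf.isBounded hg.isBounded fun i j i' j' h h' => by
      have := hf _ _ h
      have := hg _ _ h'
      rw [natPowers, Int.toNat_add (by lia) (by lia), Int.toNat_add (by lia) (by lia), pow_add,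
        pow_add, mul_mul_mul_comm]
      rfl

omit hf in
theorem subst_oneS2 : subst X Y (oneS2 R) = 1 := by
  refine ext_zwCoeff fun k l => ?_
  rw [zwCoeff_subst hX hY isPowerSeries_oneS2, finsum_eq_single _ 0]
  · simp [oneS2, natPowers]
  · intro p hp
    rw [oneS2, if_neg fun h => hp (Prod.ext h.1 h.2), zero_mul]

theorem subst_pow2 (m : ℕ) : subst X Y (pow2 f m) = subst X Y f ^ m := by
  induction m with
  | zero => rw [pow2, subst_oneS2 hX hY, pow_zero]
  | succ m ih => rw [pow2, subst_mulS2 hX hY hf (hf.pow2 m), ih, pow_succ']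

omit hX hY in
theorem le_of_pow2_ne_zero (h₀ : f 0 0 = 0) {m : ℕ} {k l : ℤ}
    (h : pow2 f m k l ≠ 0) : m ≤ k + 2 * l := by
  have hord : OrderGE 1 (ofCoeff f) := fun i j hij => by
    rw [zwCoeff_ofCoeff hf.isBounded] at hij
    have := hf _ _ hij
    have : ¬(i = 0 ∧ j = 0) := fun h => hij (by rw [h.1, h.2, h₀])
    lia
  rw [← zwCoeff_ofCoeff hf.isBounded, ← zwCoeff_pow] at h
  exact (hord.pow m _ _ h).2.2

end Subst

theorem subst_swap (X Y : ZWSeries R) (f : ℤ → ℤ → R) :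
    subst Y X f = subst X Y fun i j => f j i := by
  unfold subst evalAt sum
  congr! 3 with k l
  rw [← finsum_comp_equiv (Equiv.prodComm ℤ ℤ)]
  simp [natPowers, mul_comm]

/-- The substitution `f(X)` for a power series `f` in one variable and `X` of positive order. -/
def subst₁ (X : ZWSeries R) (f : ℤ → R) : ZWSeries R := subst X 0 (inMonomial (1, 0) f)

theorem subst_inMonomial_one_zero (X Y : ZWSeries R) (f : ℤ → R) :
    subst X Y (inMonomial (1, 0) f) = subst₁ X f :=
  evalAt_congr fun i j h => by
    rw [inMonomial_one_zero] at h
    simp [(ite_ne_right_iff.1 h).1, natPowers]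

theorem isPowerSeries_inMonomial {f : ℤ → R} (hf : ∀ n < 0, f n = 0) {v : ℤ × ℤ} (hv : 0 < v) :
    IsPowerSeries (inMonomial v f) := by
  intro k l h
  obtain ⟨n, hn⟩ := exists_of_inMonomial_ne_zero h
  obtain ⟨rfl, rfl⟩ := Prod.ext_iff.1 hn
  rw [inMonomial_smul hv.ne'] at h
  exact Prod.le_def.1 (smul_nonneg (not_lt.1 fun h' => h (hf n h')) hv.le)

section SubstOne

variable {X : ZWSeries R} (hX : OrderGE 1 X) {f : ℤ → R} (hf : ∀ n < 0, f n = 0)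
include hX hf

theorem zwCoeff_pow_mul_subst₁ (i : ℕ) (k l : ℤ) :
    zwCoeff (X ^ i * subst₁ X f) k l = ∑ᶠ n : ℤ, f (n - i) * zwCoeff (X ^ n.toNat) k l := by
  rw [subst₁, subst, evalAt, ((isPowerSeries_inMonomial hf one_zero_pos).isEvaluable hX
    (orderGE_zero 1)).zwCoeff_mul_sum]
  simp only [mul_smul_comm, zwCoeff_smul]
  refine (finsum_inMonomial_smul one_zero_pos.ne' f
    fun p => zwCoeff (X ^ i * natPowers X 0 p.1 p.2) k l).trans ?_
  rw [← finsum_comp_equiv (Equiv.subRight (i : ℤ))]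
  refine finsum_congr fun n => ?_
  by_cases hn : n < i
  · rw [Equiv.subRight_apply, hf _ (by lia), zero_smul, zero_mul]
  · obtain ⟨m, rfl⟩ := Int.le.dest (not_lt.1 hn)
    have hm : (i + m : ℤ).toNat = i + m := by lia
    simp [natPowers, pow_add, hm]

theorem zwCoeff_subst₁ (k l : ℤ) :
    zwCoeff (subst₁ X f) k l = ∑ᶠ n : ℤ, f n * zwCoeff (X ^ n.toNat) k l := by
  simpa using zwCoeff_pow_mul_subst₁ hX hf 0 k l

theorem subst₁_pow1 (m : ℕ) : subst₁ X (pow1 f m) = subst₁ X f ^ m := by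
  rw [subst₁, ← pow2_inMonomial one_zero_pos.ne',
    subst_pow2 hX (orderGE_zero 1) (isPowerSeries_inMonomial hf one_zero_pos)]
  rfl

theorem orderGE_subst₁ (h₀ : f 0 = 0) : OrderGE 1 (subst₁ X f) :=
  orderGE_subst hX (orderGE_zero 1) (isPowerSeries_inMonomial hf one_zero_pos) <| by
    rw [inMonomial_one_zero, if_pos rfl, h₀]

omit hX in
theorem zwCoeff_subst₁_monomial {a b : ℤ} (hv : 0 < (a, b)) :
    zwCoeff (subst₁ (monomial R a b : ZWSeries R) f) = inMonomial (a, b) f := by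
  have hbdd := (isPowerSeries_inMonomial hf hv).isBounded
  funext k l
  calc zwCoeff (subst₁ (monomial R a b : ZWSeries R) f) k l
      = ∑ᶠ n : ℤ, f n • oneS2 R (k - n * a) (l - n * b) := by
        rw [zwCoeff_subst₁ (orderGE_monomial_of_pos hv) hf]
        refine finsum_congr fun n => ?_
        by_cases hn : n < 0
        · rw [hf n hn, zero_mul, zero_smul]
        · lift n to ℕ using not_lt.1 hn
          rw [Int.toNat_natCast, ← Units.val_pow_eq_pow_val, ← zpow_natCast, monomial_zpow,
            zwCoeff_monomial, oneS2, smul_eq_mul]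
          simp only [sub_eq_zero]
    _ = mulS2 (inMonomial (a, b) f) (oneS2 R) k l := (mulS2_inMonomial hv.ne' f _ k l).symm
    _ = inMonomial (a, b) f k l := by
        rw [← zwCoeff_ofCoeff hbdd, ← zwCoeff_one, ← zwCoeff_mul, mul_one]

end SubstOne

/-- The family `XⁱYʲ` for arbitrary exponents. -/
def zpowers (X Y : (ZWSeries R)ˣ) (i j : ℤ) : ZWSeries R := (X ^ i * Y ^ j : (ZWSeries R)ˣ)

/-- The leading terms of `X` and `Y` are at least `z` and `w` for the exponents of
`ZWSeries R`, so that `f(X, Y)` makes sense for all `f` in `ZWSeries R`. -/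
def IsAdmissible (X Y : (ZWSeries R)ˣ) : Prop :=
  ∀ i j k l, zwCoeff (zpowers X Y i j) k l ≠ 0 → i + j ≤ k + l ∧ j ≤ l

variable {X Y : (ZWSeries R)ˣ}

theorem isAdmissible_of_zpow
    (hX : ∀ n k l, zwCoeff ((X ^ n : (ZWSeries R)ˣ) : ZWSeries R) k l ≠ 0 → n ≤ k + l ∧ 0 ≤ l)
    (hY : ∀ n k l, zwCoeff ((Y ^ n : (ZWSeries R)ˣ) : ZWSeries R) k l ≠ 0 → n ≤ k + l ∧ n ≤ l) :
    IsAdmissible X Y := by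
  intro i j k l h
  rw [zpowers, Units.val_mul] at h
  obtain ⟨i', j', h₁, h₂⟩ := exists_of_zwCoeff_mul_ne_zero h
  have := hX _ _ _ h₁
  have := hY _ _ _ h₂
  lia

variable (h : IsAdmissible X Y)
include h

theorem IsAdmissible.isEvaluable {f : ℤ → ℤ → R} (hf : IsBounded f) :
    IsEvaluable (zpowers X Y) f := by
  obtain ⟨N, hN⟩ := hf
  refine ⟨⟨N, fun p k l hp => ?_⟩, fun k l => ?_⟩
  · have := h _ _ _ _ (right_ne_zero_of_mul hp)
    have := hN _ _ (left_ne_zero_of_mul hp)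
    lia
  · refine ((Set.finite_Icc (N - l) (k + l - N)).prod (Set.finite_Icc N l)).subset fun p hp => ?_
    have := h _ _ _ _ (right_ne_zero_of_mul hp)
    have := hN _ _ (left_ne_zero_of_mul hp)
    simp only [Set.mem_prod, Set.mem_Icc]
    lia

/-- The substitution `f ↦ f(X, Y)`. -/
def substUnits : ZWSeries R →+* ZWSeries R :=
  have hev (x : ZWSeries R) : IsEvaluable (zpowers X Y) (zwCoeff x) :=
    h.isEvaluable (isBounded_zwCoeff x)
  RingHom.mk'
    { toFun x := evalAt (zpowers X Y) (zwCoeff x)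
      map_one' := by
        have h₁ : (1 : ZWSeries R) = monomial R 0 0 := by
          rw [← Units.val_one, ← zpow_zero (monomial R 0 0), monomial_zpow, mul_zero]
        rw [h₁, (hev _).evalAt_monomial, ← h₁, zpowers, zpow_zero, zpow_zero, mul_one,
          Units.val_one]
      map_mul' x y := by
        rw [zwCoeff_mul]
        refine (hev x).evalAt_mulS2 (hev y) ?_ (isBounded_zwCoeff x) (isBounded_zwCoeff y) ?_
        · rw [← zwCoeff_mul]
          exact hev _
        · intro i j i' j' _ _
          rw [zpowers, zpow_add, zpow_add, mul_mul_mul_comm, Units.val_mul]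
          rfl }
    fun x y => (hev x).evalAt_add (hev y) (hev (x + y))

theorem zwCoeff_substUnits (x : ZWSeries R) (k l : ℤ) :
    zwCoeff (substUnits h x) k l =
      ∑ᶠ p : ℤ × ℤ, zwCoeff x p.1 p.2 * zwCoeff (zpowers X Y p.1 p.2) k l :=
  (h.isEvaluable (isBounded_zwCoeff x)).zwCoeff_evalAt k l

theorem substUnits_monomial (i j : ℤ) : substUnits h (monomial R i j) = zpowers X Y i j :=
  (h.isEvaluable (isBounded_zwCoeff _)).evalAt_monomial

theorem substUnits_zpow {x y : (ZWSeries R)ˣ} (hxy : substUnits h x = y) (n : ℤ) :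
    substUnits h (x ^ n : (ZWSeries R)ˣ) = (y ^ n : (ZWSeries R)ˣ) := by
  obtain rfl : Units.map (substUnits h : ZWSeries R →* ZWSeries R) x = y := Units.ext hxy
  rw [← map_zpow]
  rfl

theorem substUnits_eq_subst {x : ZWSeries R} (hx : IsPowerSeries (zwCoeff x)) :
    substUnits h x = subst X Y (zwCoeff x) :=
  evalAt_congr fun i j hij => by
    obtain ⟨hi, hj⟩ := hx i j hij
    lift i to ℕ using hi
    lift j to ℕ using hj
    simp [zpowers, natPowers]

end Substitution

end ZWSeries

namespace FormalGroupLaw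

open ZWSeries

variable {R : Type*} [CommRing R] (𝓕 : FormalGroupLaw R)

theorem isPowerSeries_F : IsPowerSeries 𝓕.F := fun i j h => by
  by_contra! h'
  exact h (𝓕.F_supp i j (by lia))

theorem isZModW_F : IsZModW 𝓕.F := ⟨𝓕.isPowerSeries_F, 𝓕.F_modw⟩

theorem F_zero_left (j : ℤ) : 𝓕.F 0 j = if j = 1 then 1 else 0 := by
  rw [𝓕.F_comm, 𝓕.F_modw]

theorem F_zero_zero : 𝓕.F 0 0 = 0 := by simp [𝓕.F_modw]

theorem isNegZ_inv : IsNegZ 𝓕.inv := ⟨𝓕.inv_supp, 𝓕.inv_one⟩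

theorem inv_eq_zero {n : ℤ} (hn : n < 0) : 𝓕.inv n = 0 := 𝓕.inv_supp n (by lia)

theorem inv_zero : 𝓕.inv 0 = 0 := 𝓕.inv_supp 0 zero_lt_one

theorem pow1_inv_eq_zero {m : ℕ} {n : ℤ} (hn : n < m) : pow1 𝓕.inv m n = 0 := by
  by_contra h
  rw [← iotaPow_natCast 𝓕.isNegZ_inv] at h
  have := le_of_iotaPow_ne_zero 𝓕.isNegZ_inv h
  lia

theorem finsum_F_mul_pow1_inv (n : ℤ) :
    ∑ᶠ p : ℤ × ℤ, 𝓕.F p.1 p.2 * pow1 𝓕.inv p.2.toNat (n - p.1) = 0 := by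
  rw [← 𝓕.inv_eq n, ← finsum_comp_of_support_subset_range _
    (Function.injective_id.prodMap (Nat.cast_injective (R := ℤ)))]
  · rfl
  · rintro ⟨i, j⟩ h
    obtain ⟨m, rfl⟩ := Int.eq_ofNat_of_zero_le (𝓕.isPowerSeries_F _ _ (left_ne_zero_of_mul h)).2
    exact ⟨(i, m), rfl⟩

noncomputable section Points

/-- The series of positive order, with the group structure given by `F`. -/
def Point (_ : FormalGroupLaw R) := {x : ZWSeries R // OrderGE 1 x}

namespace Point

variable {𝓕}

@[ext] theorem ext {X Y : 𝓕.Point} (h : X.1 = Y.1) : X = Y := Subtype.ext h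

instance : Zero 𝓕.Point := ⟨0, orderGE_zero 1⟩

instance : Add 𝓕.Point :=
  ⟨fun X Y => ⟨subst X.1 Y.1 𝓕.F, orderGE_subst X.2 Y.2 𝓕.isPowerSeries_F 𝓕.F_zero_zero⟩⟩

instance : Neg 𝓕.Point :=
  ⟨fun X => ⟨subst₁ X.1 𝓕.inv, orderGE_subst₁ X.2 (fun _ => 𝓕.inv_eq_zero) 𝓕.inv_zero⟩⟩

theorem val_zero : (0 : 𝓕.Point).1 = 0 := rfl

theorem val_add (X Y : 𝓕.Point) : (X + Y).1 = subst X.1 Y.1 𝓕.F := rfl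

theorem val_neg (X : 𝓕.Point) : (-X).1 = subst₁ X.1 𝓕.inv := rfl

theorem zwCoeff_val_add (X Y : 𝓕.Point) (k l : ℤ) :
    zwCoeff (X + Y).1 k l =
      ∑ᶠ p : ℤ × ℤ, 𝓕.F p.1 p.2 * zwCoeff (natPowers X.1 Y.1 p.1 p.2) k l :=
  zwCoeff_subst X.2 Y.2 𝓕.isPowerSeries_F k l

protected theorem add_comm (X Y : 𝓕.Point) : X + Y = Y + X := by
  ext1
  rw [val_add, val_add, subst_swap]
  congr 1
  funext i j
  exact 𝓕.F_comm j i

protected theorem zero_add (X : 𝓕.Point) : 0 + X = X := by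
  refine ext (ext_zwCoeff fun k l => ?_)
  rw [zwCoeff_val_add, val_zero, finsum_eq_single _ (0, 1)]
  · simp [natPowers, F_zero_left]
  · rintro ⟨i, j⟩ hij
    by_contra h
    have hi : i = 0 := by
      by_contra hi
      have := 𝓕.isPowerSeries_F _ _ (left_ne_zero_of_mul h)
      exact right_ne_zero_of_mul h (by simp [natPowers, zero_pow (show i.toNat ≠ 0 by lia)])
    have := left_ne_zero_of_mul h
    simp_all [F_zero_left]

/-- The coefficient of `XᵃYᵇZᶜ` in `(X + Y) + Z` is that of `zᵃwᵇvᶜ` in `F(F(z,w),v)`. -/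
theorem zwCoeff_val_add_add (X Y Z : 𝓕.Point) (k l : ℤ) :
    zwCoeff (X + Y + Z).1 k l =
      ∑ᶠ p : (ℤ × ℤ) × ℤ, (∑ᶠ m : ℕ, 𝓕.F m p.2 * pow2 𝓕.F m p.1.1 p.1.2) *
        zwCoeff (Z.1 ^ p.2.toNat * natPowers X.1 Y.1 p.1.1 p.1.2) k l := by
  let u (c : ℤ) (p : ℤ × ℤ) : R := zwCoeff (Z.1 ^ c.toNat * natPowers X.1 Y.1 p.1 p.2) k l
  have hu {c : ℤ} {p : ℤ × ℤ} (h : u c p ≠ 0) : c + p.1 + p.2 ≤ k + 2 * l := by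
    have := (Z.2.pow c.toNat).mul (orderGE_natPowers X.2 Y.2 p.1 p.2) _ _ h
    lia
  have hpow (p : ℤ × ℤ) : zwCoeff (natPowers (X + Y).1 Z.1 p.1 p.2) k l =
      ∑ᶠ q : ℤ × ℤ, pow2 𝓕.F p.1.toNat q.1 q.2 • u p.2 q := by
    rw [natPowers, mul_comm, val_add, ← subst_pow2 X.2 Y.2 𝓕.isPowerSeries_F, subst, evalAt,
      ((𝓕.isPowerSeries_F.pow2 _).isEvaluable X.2 Y.2).zwCoeff_mul_sum]
    simp only [mul_smul_comm, zwCoeff_smul, smul_eq_mul, u]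
  have hfin : {t : ℤ × ℤ × ℤ × ℤ | 𝓕.F t.2.1 t.1 ≠ 0 ∧
      pow2 𝓕.F t.2.1.toNat t.2.2.1 t.2.2.2 ≠ 0 ∧ u t.1 t.2.2 ≠ 0}.Finite := by
    have hI := Set.finite_Icc 0 (2 * (k + 2 * l))
    refine (hI.prod (hI.prod (hI.prod hI))).subset fun t ht => ?_
    obtain ⟨h₁, h₂, h₃⟩ := ht
    have := 𝓕.isPowerSeries_F _ _ h₁
    have := 𝓕.isPowerSeries_F.pow2 _ _ _ h₂
    have := le_of_pow2_ne_zero 𝓕.isPowerSeries_F 𝓕.F_zero_zero h₂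
    have := hu h₃
    simp only [Set.mem_prod, Set.mem_Icc]
    lia
  calc zwCoeff (X + Y + Z).1 k l
      = ∑ᶠ p : ℤ × ℤ, 𝓕.F p.1 p.2 • ∑ᶠ q : ℤ × ℤ, pow2 𝓕.F p.1.toNat q.1 q.2 • u p.2 q := by
        simp only [zwCoeff_val_add (X + Y), hpow, smul_eq_mul]
    _ = ∑ᶠ p : (ℤ × ℤ) × ℤ,
          (∑ᶠ m : ℤ, 𝓕.F m p.2 * pow2 𝓕.F m.toNat p.1.1 p.1.2) • u p.2 p.1 :=
        finsum_smul_finsum_smul_swap (fun c m => 𝓕.F m c)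
          (fun _ m q => pow2 𝓕.F m.toNat q.1 q.2) u hfin
    _ = _ := finsum_congr fun p => by
        rw [← finsum_natCast fun m hm => by rw [𝓕.F_supp _ _ (.inl hm), zero_mul]]
        simp only [Int.toNat_natCast, smul_eq_mul, u]

protected theorem add_assoc (X Y Z : 𝓕.Point) : X + Y + Z = X + (Y + Z) := by
  rw [Point.add_comm X (Y + Z)]
  refine ext (ext_zwCoeff fun k l => ?_)
  let e : (ℤ × ℤ) × ℤ ≃ (ℤ × ℤ) × ℤ :=
    ⟨fun p => ((p.1.2, p.2), p.1.1), fun p => ((p.2, p.1.1), p.1.2), fun _ => rfl, fun _ => rfl⟩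
  rw [zwCoeff_val_add_add, zwCoeff_val_add_add]
  refine (finsum_congr fun p => ?_).trans (finsum_comp_equiv e)
  simp only [e, Equiv.coe_fn_mk, 𝓕.F_assoc, 𝓕.F_comm _ p.1.1, natPowers]
  congr 2
  ring

protected theorem neg_add_cancel (X : 𝓕.Point) : -X + X = 0 := by
  rw [Point.add_comm]
  refine ext (ext_zwCoeff fun k l => ?_)
  let u (n : ℤ) : R := zwCoeff (X.1 ^ n.toNat) k l
  have hu {n : ℤ} (h : u n ≠ 0) : n ≤ k + 2 * l := by
    have := X.2.pow n.toNat _ _ h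
    lia
  have hpow (p : ℤ × ℤ) (hp : 0 ≤ p.1) : zwCoeff (natPowers X.1 (-X).1 p.1 p.2) k l =
      ∑ᶠ n : ℤ, pow1 𝓕.inv p.2.toNat (n - p.1) • u n := by
    lift p.1 to ℕ using hp with i
    rw [natPowers, val_neg, ← subst₁_pow1 X.2 fun _ => 𝓕.inv_eq_zero, Int.toNat_natCast,
      zwCoeff_pow_mul_subst₁ X.2 fun _ hn => 𝓕.pow1_inv_eq_zero (by lia)]
    rfl
  have hfin : {t : (ℤ × ℤ) × ℤ | 𝓕.F t.1.1 t.1.2 ≠ 0 ∧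
      pow1 𝓕.inv t.1.2.toNat (t.2 - t.1.1) ≠ 0 ∧ u t.2 ≠ 0}.Finite := by
    have hI := Set.finite_Icc 0 (k + 2 * l)
    refine ((hI.prod hI).prod hI).subset fun t ht => ?_
    obtain ⟨h₁, h₂, h₃⟩ := ht
    have := 𝓕.isPowerSeries_F _ _ h₁
    have := le_of_iotaPow_ne_zero 𝓕.isNegZ_inv ((iotaPow_natCast 𝓕.isNegZ_inv _).symm ▸ h₂)
    have := hu h₃
    simp only [Set.mem_prod, Set.mem_Icc]
    lia
  calc zwCoeff (X + -X).1 k l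
      = ∑ᶠ p : ℤ × ℤ, 𝓕.F p.1 p.2 • ∑ᶠ n : ℤ, pow1 𝓕.inv p.2.toNat (n - p.1) • u n := by
        rw [zwCoeff_val_add]
        refine finsum_congr fun p => ?_
        by_cases hp : 𝓕.F p.1 p.2 = 0
        · rw [hp, zero_mul, zero_smul]
        · rw [hpow p (𝓕.isPowerSeries_F _ _ hp).1, smul_eq_mul]
    _ = ∑ᶠ n : ℤ, (∑ᶠ p : ℤ × ℤ, 𝓕.F p.1 p.2 * pow1 𝓕.inv p.2.toNat (n - p.1)) • u n :=
        finsum_smul_finsum_smul_comm (fun p : ℤ × ℤ => 𝓕.F p.1 p.2)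
          (fun p n => pow1 𝓕.inv p.2.toNat (n - p.1)) u hfin
    _ = 0 := finsum_eq_zero_of_forall_eq_zero fun n => by
        rw [𝓕.finsum_F_mul_pow1_inv, zero_smul]

instance : AddCommGroup 𝓕.Point where
  __ := AddGroup.ofLeftAxioms Point.add_assoc Point.zero_add Point.neg_add_cancel
  add_comm := Point.add_comm

end Point

end Points

noncomputable section Difference

/-- The variable `z` as a point. -/
def zPt : 𝓕.Point := ⟨monomial R 1 0, orderGE_monomial_of_pos one_zero_pos⟩

/-- The variable `w` as a point. -/
def wPt : 𝓕.Point := ⟨monomial R 0 1, orderGE_monomial_of_pos zero_one_pos⟩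

theorem zwCoeff_val_neg_zPt : zwCoeff (-𝓕.zPt).1 = inMonomial (1, 0) 𝓕.inv := by
  rw [Point.val_neg, zPt]
  exact zwCoeff_subst₁_monomial (fun _ => 𝓕.inv_eq_zero) one_zero_pos

theorem zwCoeff_val_neg_wPt : zwCoeff (-𝓕.wPt).1 = inMonomial (0, 1) 𝓕.inv := by
  rw [Point.val_neg, wPt]
  exact zwCoeff_subst₁_monomial (fun _ => 𝓕.inv_eq_zero) zero_one_pos

theorem zwCoeff_val_zPt_sub_wPt : zwCoeff (𝓕.zPt - 𝓕.wPt).1 = 𝓕.Fzi := by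
  funext k l
  have hpow (p : ℤ × ℤ) (hp : 0 ≤ p.1) :
      zwCoeff (natPowers 𝓕.zPt.1 (-𝓕.wPt).1 p.1 p.2) k l =
        if k = p.1 then pow1 𝓕.inv p.2.toNat l else 0 := by
    lift p.1 to ℕ using hp with i
    rw [natPowers, zPt, Int.toNat_natCast, ← Units.val_pow_eq_pow_val, ← zpow_natCast,
      monomial_zpow, zwCoeff_monomial_mul, zwCoeff_pow, zwCoeff_val_neg_wPt,
      pow2_inMonomial zero_one_pos.ne', inMonomial_zero_one]
    simp [sub_eq_zero]
  have hterm (p : ℤ × ℤ) : 𝓕.F p.1 p.2 * zwCoeff (natPowers 𝓕.zPt.1 (-𝓕.wPt).1 p.1 p.2) k l =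
      if k = p.1 then 𝓕.F p.1 p.2 * pow1 𝓕.inv p.2.toNat l else 0 := by
    by_cases h : 𝓕.F p.1 p.2 = 0
    · simp [h]
    · rw [hpow p (𝓕.isPowerSeries_F _ _ h).1, mul_ite, mul_zero]
  rw [sub_eq_add_neg, Point.zwCoeff_val_add]
  simp only [hterm]
  rw [finsum_prod_eq_finsum_snd k fun p hp => (ite_ne_right_iff.1 hp).1.symm]
  simp only [if_true]
  rw [← finsum_natCast fun m hm => by rw [𝓕.F_supp _ _ (.inr hm), zero_mul]]
  rfl

theorem isZModW_Fzi : IsZModW 𝓕.Fzi where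
  isPowerSeries i j h := by
    obtain ⟨m, hm⟩ := exists_ne_zero_of_finsum_ne_zero h
    have := 𝓕.isPowerSeries_F _ _ (left_ne_zero_of_mul hm)
    have hj : m ≤ j := not_lt.1 fun hj => right_ne_zero_of_mul hm (𝓕.pow1_inv_eq_zero hj)
    lia
  mod_w i := by
    rw [Fzi, finsum_eq_single _ 0]
    · simp [pow1, oneS, 𝓕.F_modw]
    · intro m hm
      rw [𝓕.pow1_inv_eq_zero (by lia), mul_zero]

/-- The unit `F(z, w)`. -/
def unitF : (ZWSeries R)ˣ := zUnit 𝓕.isZModW_F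

/-- The unit `F(z, ι(w))`. -/
def unitFzi : (ZWSeries R)ˣ := zUnit 𝓕.isZModW_Fzi

/-- The unit `ι(z)`. -/
def unitInvZ : (ZWSeries R)ˣ := negUnit 𝓕.isNegZ_inv one_zero_pos

/-- The unit `ι(w)`. -/
def unitInvW : (ZWSeries R)ˣ := negUnit 𝓕.isNegZ_inv zero_one_pos

theorem val_unitFzi : (𝓕.unitFzi : ZWSeries R) = (𝓕.zPt - 𝓕.wPt).1 :=
  ext_zwCoeff fun k l => by rw [unitFzi, zwCoeff_zUnit, zwCoeff_val_zPt_sub_wPt]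

theorem val_unitInvZ : (𝓕.unitInvZ : ZWSeries R) = (-𝓕.zPt).1 :=
  ext_zwCoeff fun k l => by rw [unitInvZ, zwCoeff_negUnit, zwCoeff_val_neg_zPt]

theorem val_unitInvW : (𝓕.unitInvW : ZWSeries R) = (-𝓕.wPt).1 :=
  ext_zwCoeff fun k l => by rw [unitInvW, zwCoeff_negUnit, zwCoeff_val_neg_wPt]

theorem isAdmissible_unitFzi : IsAdmissible 𝓕.unitFzi (monomial R 0 1) :=
  isAdmissible_of_zpow
    (fun n k l h => by
      rw [unitFzi, zwCoeff_zUnit_zpow] at h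
      exact le_of_izwPow_ne_zero 𝓕.isZModW_Fzi h)
    (fun n k l h => by
      rw [monomial_zpow, zwCoeff_monomial] at h
      have := (ite_ne_right_iff.1 h).1
      lia)

theorem isAdmissible_unitInvZ : IsAdmissible 𝓕.unitInvZ (monomial R 0 1) :=
  isAdmissible_of_zpow
    (fun n k l h => by
      rw [unitInvZ, zwCoeff_negUnit_zpow, inMonomial_one_zero] at h
      obtain ⟨rfl, hι⟩ := ite_ne_right_iff.1 h
      have := le_of_iotaPow_ne_zero 𝓕.isNegZ_inv hι
      lia)
    (fun n k l h => by
      rw [monomial_zpow, zwCoeff_monomial] at h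
      have := (ite_ne_right_iff.1 h).1
      lia)

theorem isAdmissible_unitInvW : IsAdmissible (monomial R 1 0) 𝓕.unitInvW :=
  isAdmissible_of_zpow
    (fun n k l h => by
      rw [monomial_zpow, zwCoeff_monomial] at h
      have := (ite_ne_right_iff.1 h).1
      lia)
    (fun n k l h => by
      rw [unitInvW, zwCoeff_negUnit_zpow, inMonomial_zero_one] at h
      obtain ⟨rfl, hι⟩ := ite_ne_right_iff.1 h
      have := le_of_iotaPow_ne_zero 𝓕.isNegZ_inv hι
      lia)

theorem zwCoeff_unitF : zwCoeff (𝓕.unitF : ZWSeries R) = 𝓕.F := zwCoeff_zUnit 𝓕.isZModW_F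

/-- `F(F(z, ι(w)), w) = z`. -/
theorem substUnits_unitFzi_unitF :
    substUnits 𝓕.isAdmissible_unitFzi 𝓕.unitF = monomial R 1 0 := by
  rw [substUnits_eq_subst _ (𝓕.zwCoeff_unitF ▸ 𝓕.isPowerSeries_F), 𝓕.zwCoeff_unitF, val_unitFzi]
  exact congrArg Subtype.val (sub_add_cancel 𝓕.zPt 𝓕.wPt)

theorem substUnits_unitInvW_unitF :
    substUnits 𝓕.isAdmissible_unitInvW 𝓕.unitF = 𝓕.unitFzi := by
  rw [substUnits_eq_subst _ (𝓕.zwCoeff_unitF ▸ 𝓕.isPowerSeries_F), 𝓕.zwCoeff_unitF, val_unitInvW,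
    val_unitFzi]
  exact congrArg Subtype.val (sub_eq_add_neg 𝓕.zPt 𝓕.wPt).symm

/-- `ι(F(z, ι(w))) = F(ι(z), w)`. -/
theorem substUnits_unitFzi_unitInvZ :
    substUnits 𝓕.isAdmissible_unitFzi 𝓕.unitInvZ =
      substUnits 𝓕.isAdmissible_unitInvZ 𝓕.unitF := by
  have hinv : zwCoeff (𝓕.unitInvZ : ZWSeries R) = inMonomial (1, 0) 𝓕.inv :=
    zwCoeff_negUnit 𝓕.isNegZ_inv one_zero_pos
  have hneg : -(𝓕.zPt - 𝓕.wPt) = -𝓕.zPt + 𝓕.wPt := by abel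
  rw [substUnits_eq_subst 𝓕.isAdmissible_unitFzi (hinv ▸
      isPowerSeries_inMonomial (fun _ => 𝓕.inv_eq_zero) one_zero_pos),
    substUnits_eq_subst 𝓕.isAdmissible_unitInvZ (𝓕.zwCoeff_unitF ▸ 𝓕.isPowerSeries_F),
    𝓕.zwCoeff_unitF, hinv, val_unitInvZ, val_unitFzi]
  exact (subst_inMonomial_one_zero _ _ _).trans (congrArg Subtype.val hneg)

end Difference

section Identities

theorem zwCoeff_unitF_zpow (n : ℤ) :
    zwCoeff ((𝓕.unitF ^ n : (ZWSeries R)ˣ) : ZWSeries R) = izwPow 𝓕.F n :=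
  zwCoeff_zUnit_zpow 𝓕.isZModW_F n

theorem zwCoeff_unitFzi_zpow (n : ℤ) :
    zwCoeff ((𝓕.unitFzi ^ n : (ZWSeries R)ˣ) : ZWSeries R) = izwPow 𝓕.Fzi n :=
  zwCoeff_zUnit_zpow 𝓕.isZModW_Fzi n

theorem zwCoeff_zpowers_unitFzi (i j k l : ℤ) :
    zwCoeff (zpowers 𝓕.unitFzi (monomial R 0 1) i j) k l = izwPow 𝓕.Fzi i k (l - j) := by
  rw [zpowers, Units.val_mul, monomial_zpow, mul_zero, mul_one, zwCoeff_mul_monomial,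
    zwCoeff_unitFzi_zpow, sub_zero]

theorem zwCoeff_unitInvZ_zpow (n : ℤ) :
    zwCoeff ((𝓕.unitInvZ ^ n : (ZWSeries R)ˣ) : ZWSeries R) =
      inMonomial (1, 0) (iotaPow 𝓕.inv n) :=
  zwCoeff_negUnit_zpow 𝓕.isNegZ_inv one_zero_pos n

theorem zwCoeff_unitInvW_zpow (n : ℤ) :
    zwCoeff ((𝓕.unitInvW ^ n : (ZWSeries R)ˣ) : ZWSeries R) =
      inMonomial (0, 1) (iotaPow 𝓕.inv n) :=
  zwCoeff_negUnit_zpow 𝓕.isNegZ_inv zero_one_pos n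

/-- `ι(F(z, ι(w)))ᵖ zʲ = F(ι(z), w)ᵖ zʲ`, where on the left `z` is written as `F(F(z, ι(w)), w)`. -/
theorem finsum_mul_izwPow_Fzi (j p k l : ℤ) :
    ∑ᶠ q : ℤ × ℤ, (∑ᶠ n, iotaPow 𝓕.inv p n * izwPow 𝓕.F j (q.1 - n) q.2) *
        izwPow 𝓕.Fzi q.1 k (l - q.2) =
      ∑ᶠ q, izwPow 𝓕.F p q l * iotaPow 𝓕.inv q (k - j) := by
  let U : (ZWSeries R)ˣ :=
    Units.map (substUnits 𝓕.isAdmissible_unitInvZ : ZWSeries R →* ZWSeries R) 𝓕.unitF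
  have key : substUnits 𝓕.isAdmissible_unitFzi
        ((𝓕.unitInvZ ^ p : (ZWSeries R)ˣ) * (𝓕.unitF ^ j : (ZWSeries R)ˣ)) =
      substUnits 𝓕.isAdmissible_unitInvZ (𝓕.unitF ^ p : (ZWSeries R)ˣ) * monomial R j 0 := by
    rw [map_mul, substUnits_zpow _ 𝓕.substUnits_unitFzi_unitF, monomial_zpow, mul_one, mul_zero,
      substUnits_zpow _ (y := U) 𝓕.substUnits_unitFzi_unitInvZ, substUnits_zpow _ (y := U) rfl]
  have hInvZ (p : ℤ × ℤ) : zwCoeff (zpowers 𝓕.unitInvZ (monomial R 0 1) p.1 p.2) (k - j) l =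
      if l = p.2 then iotaPow 𝓕.inv p.1 (k - j) else 0 := by
    rw [zpowers, Units.val_mul, monomial_zpow, mul_zero, mul_one, zwCoeff_mul_monomial,
      zwCoeff_unitInvZ_zpow, inMonomial_one_zero, sub_zero]
    simp only [sub_eq_zero]
  have h := congrArg (fun x => zwCoeff x k l) key
  simp only [zwCoeff_mul_monomial, zwCoeff_substUnits, zwCoeff_mul, zwCoeff_unitF_zpow,
    zwCoeff_unitInvZ_zpow, mulS2_inMonomial one_zero_pos.ne', zwCoeff_zpowers_unitFzi, sub_zero,
    hInvZ, mul_ite, mul_zero] at h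
  refine Eq.trans ?_ (h.trans ?_)
  · simp
  · rw [finsum_prod_eq_finsum_fst l fun p hp => (ite_ne_right_iff.1 hp).1.symm]
    simp only [if_true]

/-- The series `f(ι(w))`, for a Laurent series `f`. -/
noncomputable def atInv (f : ℤ → R) : ℤ → R := fun l => ∑ᶠ j, f j * iotaPow 𝓕.inv j l

theorem atInv_izwPow_F (m k : ℤ) : 𝓕.atInv (izwPow 𝓕.F m k) = izwPow 𝓕.Fzi m k := by
  funext l
  have hpow (p : ℤ × ℤ) : zwCoeff (zpowers (monomial R 1 0) 𝓕.unitInvW p.1 p.2) k l =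
      if k = p.1 then iotaPow 𝓕.inv p.2 l else 0 := by
    rw [zpowers, Units.val_mul, monomial_zpow, mul_one, mul_zero, zwCoeff_monomial_mul,
      zwCoeff_unitInvW_zpow, inMonomial_zero_one, sub_zero]
    simp only [sub_eq_zero]
  have h := congrArg (fun x => zwCoeff x k l) (substUnits_zpow _ 𝓕.substUnits_unitInvW_unitF m)
  simp only [zwCoeff_substUnits, zwCoeff_unitF_zpow, zwCoeff_unitFzi_zpow, hpow, mul_ite,
    mul_zero] at h
  rw [finsum_prod_eq_finsum_snd k fun p hp => (ite_ne_right_iff.1 hp).1.symm] at h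
  simpa only [atInv, if_true] using h

theorem atInv_pow2_F (m : ℕ) (k : ℤ) : 𝓕.atInv (pow2 𝓕.F m k) = pow2 𝓕.Fzi m k := by
  rw [← izwPow_natCast 𝓕.isZModW_F, ← izwPow_natCast 𝓕.isZModW_Fzi, atInv_izwPow_F]

theorem mulS_atInv_iotaPow {f : ℤ → R} (hf : IsLaurent f) (q l : ℤ) :
    mulS (𝓕.atInv f) (iotaPow 𝓕.inv q) l = ∑ᶠ j, iotaPow 𝓕.inv j l * f (j - q) := by
  obtain ⟨D, hD⟩ := exists_le_of_isLaurent hf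
  have hadd (j : ℤ) : f j * iotaPow 𝓕.inv (j + q) l =
      f j • ∑ᶠ i, iotaPow 𝓕.inv j i • iotaPow 𝓕.inv q (l - i) := by
    rw [← mulS_iotaPow 𝓕.isNegZ_inv, smul_eq_mul, mulS]
  rw [← finsum_comp_equiv (Equiv.addRight q)]
  simp only [Equiv.coe_addRight, add_sub_cancel_right, mul_comm _ (f _), hadd]
  refine (finsum_smul_finsum_smul_comm f _ _ <|
    (Set.finite_Icc (D, D) (l - q, l - q)).subset ?_).symm
  rintro ⟨j, i⟩ ⟨h₁, h₂, h₃⟩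
  have h₁ := hD _ h₁
  have h₂ := le_of_iotaPow_ne_zero 𝓕.isNegZ_inv h₂
  have h₃ := le_of_iotaPow_ne_zero 𝓕.isNegZ_inv h₃
  simp only [Set.mem_Icc, Prod.le_def]
  lia

theorem isLaurent_atInv {f : ℤ → R} (hf : IsLaurent f) : IsLaurent (𝓕.atInv f) := by
  obtain ⟨D, hD⟩ := exists_le_of_isLaurent hf
  refine isLaurent_of_le (N := D) fun l h => ?_
  obtain ⟨j, hj⟩ := exists_ne_zero_of_finsum_ne_zero h
  exact (hD _ (left_ne_zero_of_mul hj)).trans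
    (le_of_iotaPow_ne_zero 𝓕.isNegZ_inv (right_ne_zero_of_mul hj))

theorem isPowerSeries_substUnits_unitFzi {x : ZWSeries R} (hx : IsPowerSeries (zwCoeff x)) :
    IsPowerSeries (zwCoeff (substUnits 𝓕.isAdmissible_unitFzi x)) := by
  intro k l h
  rw [zwCoeff_substUnits] at h
  obtain ⟨⟨i, j⟩, hij⟩ := exists_ne_zero_of_finsum_ne_zero h
  rw [zwCoeff_zpowers_unitFzi] at hij
  obtain ⟨hi, hj⟩ := hx _ _ (left_ne_zero_of_mul hij)
  lift i to ℕ using hi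
  rw [izwPow_natCast 𝓕.isZModW_Fzi] at hij
  have := 𝓕.isZModW_Fzi.isPowerSeries.pow2 _ _ _ (right_ne_zero_of_mul hij)
  lia

theorem exists_unitF_eq_add_mul : ∃ x : ZWSeries R, IsPowerSeries (zwCoeff x) ∧
    (𝓕.unitF : ZWSeries R) = monomial R 0 1 + monomial R 1 0 * x := by
  let H : ℤ → ℤ → R := fun i j => if 0 ≤ i then 𝓕.F (i + 1) j else 0
  have hH : IsPowerSeries H := fun i j h => by
    obtain ⟨hi, h⟩ := ite_ne_right_iff.1 h
    exact ⟨hi, (𝓕.isPowerSeries_F _ _ h).2⟩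
  refine ⟨ofCoeff H, (zwCoeff_ofCoeff hH.isBounded).symm ▸ hH, ext_zwCoeff fun i j => ?_⟩
  rw [zwCoeff_add, zwCoeff_monomial_mul, zwCoeff_ofCoeff hH.isBounded, zwCoeff_unitF,
    zwCoeff_monomial]
  obtain hi | rfl | hi := lt_trichotomy i 0
  · simp [H, 𝓕.F_supp i j (.inl hi), hi.ne, show ¬1 ≤ i by lia]
  · simp [H, 𝓕.F_zero_left]
  · simp [H, hi.ne', show 1 ≤ i by lia]

/-- Writing `F(z, w) = w + z x(z, w)` and replacing `z` by `F(z, ι(w))` exhibits `z - w` as a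
multiple of `F(z, ι(w))`. -/
theorem exists_pow2_zmw_eq : ∃ h : ℤ → ℤ → R, IsPowerSeries h ∧
    ∀ M, pow2 (zmw R) M = mulS2 (pow2 h M) (pow2 𝓕.Fzi M) := by
  obtain ⟨x, hx, hF⟩ := 𝓕.exists_unitF_eq_add_mul
  let y := substUnits 𝓕.isAdmissible_unitFzi x
  have hzw : (monomial R 1 0 : ZWSeries R) = monomial R 0 1 + y * 𝓕.unitFzi := by
    have h := 𝓕.substUnits_unitFzi_unitF
    rw [hF, map_add, map_mul, substUnits_monomial, substUnits_monomial, zpowers, zpowers] at h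
    simpa [y, mul_comm] using h.symm
  refine ⟨zwCoeff y, 𝓕.isPowerSeries_substUnits_unitFzi hx, fun M => ?_⟩
  rw [← zwCoeff_monomial_sub_monomial, sub_eq_of_eq_add' hzw, ← zwCoeff_pow, mul_pow, zwCoeff_mul,
    zwCoeff_pow, zwCoeff_pow, unitFzi, zwCoeff_zUnit]

end Identities

theorem pow2_F_comm (m : ℕ) (k l : ℤ) : pow2 𝓕.F m k l = pow2 𝓕.F m l k := by
  rw [← pow2_swap, funext₂ fun i j => 𝓕.F_comm j i]

theorem nonneg_of_izwPow_F_ne_zero {m k l : ℤ} (hm : 0 ≤ m) (h : izwPow 𝓕.F m k l ≠ 0) :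
    0 ≤ k ∧ 0 ≤ l := by
  lift m to ℕ using hm
  rw [izwPow_natCast 𝓕.isZModW_F] at h
  exact 𝓕.isPowerSeries_F.pow2 m _ _ h

end FormalGroupLaw

namespace VertexFAlgebra

open ZWSeries

variable {R : Type*} [CommRing R] {𝓕 : FormalGroupLaw R} {V : Type*} [AddCommGroup V] [Module R V]
  (A : VertexFAlgebra R 𝓕 V)

section Shift

/-- The components `𝒮⁽ⁿ⁾` of the shift operator, extended by zero to all integers `n`. -/
def shift (n : ℤ) : V →ₗ[R] V := if 0 ≤ n then A.S n.toNat else 0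

theorem shift_natCast (n : ℕ) : A.shift n = A.S n := by simp [shift]

theorem shift_of_neg {n : ℤ} (hn : n < 0) : A.shift n = 0 := if_neg hn.not_ge

theorem nonneg_of_shift_ne_zero {n : ℤ} {v : V} (h : A.shift n v ≠ 0) : 0 ≤ n :=
  not_lt.1 fun hn => h (by rw [A.shift_of_neg hn, LinearMap.zero_apply])

theorem ne_zero_of_shift_ne_zero {n : ℤ} {v : V} (h : A.shift n v ≠ 0) : v ≠ 0 :=
  fun hv => h (by rw [hv, map_zero])

theorem shift_shift (v : V) (i n : ℤ) :
    A.shift i (A.shift n v) = ∑ᶠ j, izwPow 𝓕.F j n i • A.shift j v := by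
  by_cases h : 0 ≤ i ∧ 0 ≤ n
  · obtain ⟨hi, hn⟩ := h
    lift i to ℕ using hi
    lift n to ℕ using hn
    rw [← finsum_natCast fun j hj => by rw [A.shift_of_neg hj, LinearMap.zero_apply, smul_zero]]
    simp only [izwPow_natCast 𝓕.isZModW_F, shift_natCast, A.S_comp, 𝓕.pow2_F_comm _ (i : ℤ)]
  · rw [finsum_eq_zero_of_forall_eq_zero fun j => by_contra fun hj => h <|
      (𝓕.nonneg_of_izwPow_F_ne_zero (A.nonneg_of_shift_ne_zero (right_ne_zero_of_smul hj))
        (left_ne_zero_of_smul hj)).symm]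
    exact by_contra fun h' => h ⟨A.nonneg_of_shift_ne_zero h',
      A.nonneg_of_shift_ne_zero (A.ne_zero_of_shift_ne_zero h')⟩

theorem Y_shift_left (a b : V) (n : ℤ) :
    A.Y (A.shift n a) b = fun k => substF 𝓕 (A.Y a b) k n := by
  funext k
  by_cases hn : 0 ≤ n
  · lift n to ℕ using hn
    rw [shift_natCast, A.translation]
  · rw [A.shift_of_neg (not_le.1 hn), LinearMap.zero_apply, map_zero, LinearMap.zero_apply,
      Pi.zero_apply, substF]
    refine (finsum_eq_zero_of_forall_eq_zero fun m => by_contra fun hm => hn ?_).symm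
    exact (le_of_izwPow_ne_zero 𝓕.isZModW_F (left_ne_zero_of_smul hm)).2

end Shift

section Twist

/-- The series `𝒮(z) g(ι(z))`, for a Laurent series `g` with coefficients in `V`. -/
noncomputable def twist (g : ℤ → V) : ℤ → V :=
  fun k => ∑ᶠ p : ℤ × ℤ, iotaPow 𝓕.inv p.2 (k - p.1) • A.shift p.1 (g p.2)

theorem Y_eq_twist (a b : V) : A.Y a b = A.twist (A.Y b a) := by
  funext k
  rw [A.skew, twist, ← finsum_comp_of_support_subset_range
    (φ := fun p : ℕ × ℤ => ((p.1 : ℤ), p.2)) _ fun p q h => by simpa [Prod.ext_iff] using h]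
  · simp only [shift_natCast]
  · intro p hp
    have := A.nonneg_of_shift_ne_zero (right_ne_zero_of_smul hp)
    exact ⟨(p.1.toNat, p.2), Prod.ext (by simp [this]) rfl⟩

theorem exists_of_twist_ne_zero {g : ℤ → V} {k : ℤ} (h : A.twist g k ≠ 0) :
    ∃ q ≤ k, g q ≠ 0 := by
  obtain ⟨⟨i, q⟩, hp⟩ := exists_ne_zero_of_finsum_ne_zero h
  have hι := le_of_iotaPow_ne_zero 𝓕.isNegZ_inv (left_ne_zero_of_smul hp)
  have hi := A.nonneg_of_shift_ne_zero (right_ne_zero_of_smul hp)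
  exact ⟨q, by lia, A.ne_zero_of_shift_ne_zero (right_ne_zero_of_smul hp)⟩

variable {g : ℤ → V} (hg : IsLaurent g)
include hg

theorem finite_twist (k : ℤ) :
    {p : ℤ × ℤ | iotaPow 𝓕.inv p.2 (k - p.1) ≠ 0 ∧ A.shift p.1 (g p.2) ≠ 0}.Finite := by
  obtain ⟨D, hD⟩ := exists_le_of_isLaurent hg
  refine (Set.finite_Icc (0, D) (k - D, k)).subset ?_
  rintro ⟨i, q⟩ ⟨h₁, h₂⟩
  have h₁ := le_of_iotaPow_ne_zero 𝓕.isNegZ_inv h₁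
  have h₃ := A.nonneg_of_shift_ne_zero h₂
  have h₄ := hD _ (A.ne_zero_of_shift_ne_zero h₂)
  simp only [Set.mem_Icc, Prod.le_def]
  lia

theorem shift_twist (i k : ℤ) :
    A.shift i (A.twist g k) = ∑ᶠ p : ℤ × ℤ,
      (∑ᶠ n, iotaPow 𝓕.inv p.2 n * izwPow 𝓕.F p.1 (k - n) i) • A.shift p.1 (g p.2) := by
  obtain ⟨D, hD⟩ := exists_le_of_isLaurent hg
  rw [twist, map_finsum_smul _ (A.finite_twist hg k)]
  simp only [shift_shift]
  rw [finsum_smul_finsum_smul_swap (fun q n => iotaPow 𝓕.inv q (k - n))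
    (fun _ n j => izwPow 𝓕.F j n i) (fun q j => A.shift j (g q))]
  · refine finsum_congr fun p => congrArg (· • _) ?_
    rw [← finsum_comp_equiv (Equiv.subLeft k)]
    simp only [Equiv.subLeft_apply, sub_sub_cancel]
  · refine (Set.finite_Icc (D, 0, 0) (k, k - D, k - D + i)).subset ?_
    rintro ⟨q, n, j⟩ ⟨h₁, h₂, h₃⟩
    have h₁ := le_of_iotaPow_ne_zero 𝓕.isNegZ_inv h₁
    have hj := A.nonneg_of_shift_ne_zero h₃
    have h₂' := 𝓕.nonneg_of_izwPow_F_ne_zero hj h₂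
    have h₂ := le_of_izwPow_ne_zero 𝓕.isZModW_F h₂
    have h₄ := hD _ (A.ne_zero_of_shift_ne_zero h₃)
    simp only [Set.mem_Icc, Prod.le_def]
    lia

theorem twist_substF_eq_finsum (k l : ℤ) :
    A.twist (fun q => substF 𝓕 g q l) k = ∑ᶠ p : ℤ × ℤ,
      (∑ᶠ q, iotaPow 𝓕.inv q (k - p.1) * izwPow 𝓕.F p.2 q l) • A.shift p.1 (g p.2) := by
  obtain ⟨D, hD⟩ := exists_le_of_isLaurent hg
  have hshift (i q : ℤ) : A.shift i (substF 𝓕 g q l) =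
      ∑ᶠ p, izwPow 𝓕.F p q l • A.shift i (g p) := by
    refine map_finsum_smul _ <| (Set.finite_Icc D (q + l)).subset fun p hp => ?_
    exact ⟨hD _ hp.2, (le_of_izwPow_ne_zero 𝓕.isZModW_F hp.1).1⟩
  simp only [twist, hshift]
  refine finsum_smul_finsum_smul (fun i q => iotaPow 𝓕.inv q (k - i))
    (fun _ q p => izwPow 𝓕.F p q l) (fun i p => A.shift i (g p)) <|
    (Set.finite_Icc (0, D - l, D) (k - D + l, k, k + l)).subset ?_
  rintro ⟨i, q, p⟩ ⟨h₁, h₂, h₃⟩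
  have h₁ := le_of_iotaPow_ne_zero 𝓕.isNegZ_inv h₁
  have h₂ := le_of_izwPow_ne_zero 𝓕.isZModW_F h₂
  have hi := A.nonneg_of_shift_ne_zero h₃
  have hp := hD _ (A.ne_zero_of_shift_ne_zero h₃)
  simp only [Set.mem_Icc, Prod.le_def]
  lia

theorem twist_substF (k l : ℤ) :
    A.twist (fun q => substF 𝓕 g q l) k =
      ∑ᶠ q : ℤ × ℤ, izwPow 𝓕.Fzi q.1 k (l - q.2) • A.shift q.2 (A.twist g q.1) := by
  obtain ⟨D, hD⟩ := exists_le_of_isLaurent hg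
  rw [A.twist_substF_eq_finsum hg]
  simp only [A.shift_twist hg]
  rw [finsum_smul_finsum_smul_comm (fun q : ℤ × ℤ => izwPow 𝓕.Fzi q.1 k (l - q.2))]
  · refine finsum_congr fun p => congrArg (· • _) ?_
    simp only [mul_comm (izwPow 𝓕.Fzi _ _ _), 𝓕.finsum_mul_izwPow_Fzi]
    exact finsum_congr fun q => mul_comm _ _
  · refine (Set.finite_Icc ((D, 0), (0, D)) ((k + l, l), (l + k + l - D, k + l))).subset ?_
    rintro ⟨⟨m, i⟩, j, p⟩ ⟨h₁, h₂, h₃⟩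
    have h₁ := le_of_izwPow_ne_zero 𝓕.isZModW_Fzi h₁
    obtain ⟨n, hn⟩ := exists_ne_zero_of_finsum_ne_zero h₂
    have hι := le_of_iotaPow_ne_zero 𝓕.isNegZ_inv (left_ne_zero_of_mul hn)
    have hj := A.nonneg_of_shift_ne_zero h₃
    have hF := 𝓕.nonneg_of_izwPow_F_ne_zero hj (right_ne_zero_of_mul hn)
    have hF' := le_of_izwPow_ne_zero 𝓕.isZModW_F (right_ne_zero_of_mul hn)
    have hp := hD _ (A.ne_zero_of_shift_ne_zero h₃)
    simp only [Set.mem_Icc, Prod.le_def]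
    lia

variable {f : ℤ → R} (hf : IsLaurent f)
include hf

theorem mulS_twist (l : ℤ) :
    mulS f (A.twist g) l =
      ∑ᶠ p : ℤ × ℤ, mulS f (iotaPow 𝓕.inv p.2) (l - p.1) • A.shift p.1 (g p.2) := by
  obtain ⟨C, hC⟩ := exists_le_of_isLaurent hf
  obtain ⟨D, hD⟩ := exists_le_of_isLaurent hg
  simp only [mulS, twist, sub_right_comm l]
  refine finsum_smul_finsum_smul_comm f (fun n p => iotaPow 𝓕.inv p.2 (l - n - p.1))
    (fun p : ℤ × ℤ => A.shift p.1 (g p.2)) <|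
    (Set.finite_Icc (C, (0, D)) (l - D, (l - C - D, l - C))).subset ?_
  rintro ⟨n, i, q⟩ ⟨h₁, h₂, h₃⟩
  have h₁ := hC _ h₁
  have h₂ := le_of_iotaPow_ne_zero 𝓕.isNegZ_inv h₂
  have hi := A.nonneg_of_shift_ne_zero h₃
  have hq := hD _ (A.ne_zero_of_shift_ne_zero h₃)
  simp only [Set.mem_Icc, Prod.le_def]
  lia

theorem twist_mulS : A.twist (mulS f g) = mulS (𝓕.atInv f) (A.twist g) := by
  obtain ⟨C, hC⟩ := exists_le_of_isLaurent hf
  obtain ⟨D, hD⟩ := exists_le_of_isLaurent hg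
  funext l
  have hshift (i q : ℤ) : A.shift i (mulS f g q) = ∑ᶠ r, f (q - r) • A.shift i (g r) := by
    rw [mulS_eq_finsum_sub_smul]
    refine map_finsum_smul _ <| (Set.finite_Icc D (q - C)).subset fun r hr => ?_
    exact ⟨hD _ hr.2, le_sub_comm.1 (hC _ hr.1)⟩
  rw [A.mulS_twist hg (𝓕.isLaurent_atInv hf), twist]
  simp only [hshift, 𝓕.mulS_atInv_iotaPow hf]
  refine finsum_smul_finsum_smul (fun i q => iotaPow 𝓕.inv q (l - i)) (fun _ q r => f (q - r))
    (fun i r => A.shift i (g r)) <|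
    (Set.finite_Icc (0, C + D, D) (l - C - D, l, l - C)).subset ?_
  rintro ⟨i, q, r⟩ ⟨h₁, h₂, h₃⟩
  have h₁ := le_of_iotaPow_ne_zero 𝓕.isNegZ_inv h₁
  have h₂ := hC _ h₂
  have hi := A.nonneg_of_shift_ne_zero h₃
  have hr := hD _ (A.ne_zero_of_shift_ne_zero h₃)
  simp only [Set.mem_Icc, Prod.le_def]
  lia

omit hg hf

theorem twist_finsum {g : ℤ → ℤ → V} {l : ℤ}
    (hg : {p : ℤ × ℤ | p.2 ≤ l ∧ g p.1 p.2 ≠ 0}.Finite) :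
    A.twist (fun q => ∑ᶠ m, g m q) l = ∑ᶠ m, A.twist (g m) l := by
  let φ (p : ℤ × ℤ) : V →+ V := (iotaPow 𝓕.inv p.2 (l - p.1) • A.shift p.1).toAddMonoidHom
  have hφ {p : ℤ × ℤ} (h : φ p ≠ 0) : p.1 ∈ Set.Icc 0 (l - p.2) := by
    obtain ⟨v, hv⟩ := DFunLike.ne_iff.1 h
    exact ⟨A.nonneg_of_shift_ne_zero (right_ne_zero_of_smul hv),
      le_sub_comm.1 (le_of_iotaPow_ne_zero 𝓕.isNegZ_inv (left_ne_zero_of_smul hv))⟩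
  have hfin : {t : (ℤ × ℤ) × ℤ | φ t.1 ≠ 0 ∧ g t.2 t.1.2 ≠ 0}.Finite := by
    refine (hg.biUnion fun p _ =>
      (Set.finite_Icc 0 (l - p.2)).image fun i => ((i, p.2), p.1)).subset ?_
    rintro ⟨⟨i, q⟩, m⟩ ⟨h₁, h₂⟩
    have hi := Set.mem_Icc.1 (hφ h₁)
    exact Set.mem_biUnion (x := (m, q)) ⟨by lia, h₂⟩ ⟨i, hi, rfl⟩
  refine (finsum_map_finsum φ (fun p m => g m p.2) hfin).trans ?_
  rw [← finsum_comp_equiv (Equiv.prodComm ℤ (ℤ × ℤ))]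
  refine finsum_curry _ <|
    (hfin.preimage (Equiv.prodComm ℤ (ℤ × ℤ)).injective.injOn).subset fun t ht => ?_
  exact ⟨fun h => ht (DFunLike.congr_fun h _), fun h => ht ((congrArg _ h).trans (map_zero _))⟩

end Twist

section Products

theorem isLocallyFinite_twist {G : ℤ → ℤ → V} (hG : IsLocallyFinite G) :
    IsLocallyFinite fun k => A.twist (G k) := by
  intro k l
  obtain ⟨K, hK⟩ := hG k l
  refine ⟨K, fun k' hk l' hl h => ?_⟩
  obtain ⟨q, hq, h⟩ := A.exists_of_twist_ne_zero h
  exact (hK k' hk q (hq.trans hl) h).imp_right (le_trans · hq)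

theorem twist_mulS2 {G : ℤ → ℤ → V} (hG : IsLocallyFinite G) (N : ℕ) :
    (fun k => A.twist (mulS2 (pow2 𝓕.F N) G k)) =
      mulS2 (pow2 𝓕.Fzi N) fun k => A.twist (G k) := by
  have hF := 𝓕.isPowerSeries_F.pow2 N
  funext k l
  rw [mulS2_eq_finsum_mulS (𝓕.isZModW_Fzi.isPowerSeries.pow2 N) (A.isLocallyFinite_twist hG),
    funext (mulS2_eq_finsum_mulS hF hG k), A.twist_finsum]
  · refine finsum_congr fun i => ?_
    rw [A.twist_mulS (hG.isLaurent _) (isLaurent_of_le fun j h => (hF i j h).2), 𝓕.atInv_pow2_F]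
  · obtain ⟨K, hK⟩ := hG k l
    refine (Set.finite_Icc (0, K) (k - K, l)).subset ?_
    rintro ⟨i, q⟩ ⟨hq, h⟩
    obtain ⟨j, hj⟩ := exists_ne_zero_of_finsum_ne_zero h
    have h₁ := hF _ _ (left_ne_zero_of_smul hj)
    have h₂ := hK (k - i) (by lia) (q - j) (by lia) (right_ne_zero_of_smul hj)
    simp only [Set.mem_Icc, Prod.le_def]
    lia

theorem Y_shift_right (a b : V) (k l : ℤ) :
    A.Y a (A.shift l b) k =
      ∑ᶠ q : ℤ × ℤ, izwPow 𝓕.Fzi q.1 k (l - q.2) • A.shift q.2 (A.Y a b q.1) := by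
  rw [A.Y_eq_twist, A.Y_shift_left, A.twist_substF (A.Y_laurent b a)]
  simp only [← A.Y_eq_twist]

variable {d : ℤ → V} (a : V)

theorem isLaurent_Y_apply (hd : IsLaurent d) (m : ℤ) : IsLaurent fun q => A.Y a (d q) m := by
  obtain ⟨D, hD⟩ := exists_le_of_isLaurent hd
  exact isLaurent_of_le fun q h => hD q fun h₀ => h (by simp [h₀])

theorem isLocallyFinite_Y (hd : IsLaurent d) : IsLocallyFinite fun q m => A.Y a (d q) m := by
  obtain ⟨D, hD⟩ := exists_le_of_isLaurent hd
  exact isLocallyFinite_of_isLaurent (fun q => A.Y_laurent a (d q))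
    fun q m h => hD q fun h₀ => h (by simp [h₀])

theorem substFProd_eq_finsum_mulS (hd : IsLaurent d) (k l : ℤ) :
    substFProd 𝓕 (fun v => A.Y a v) d k l =
      ∑ᶠ m, mulS (izwPow 𝓕.F m k) (fun q => A.Y a (d q) m) l := by
  obtain ⟨D, hD⟩ := exists_le_of_isLaurent hd
  obtain ⟨K, hK⟩ := exists_le_of_forall_isLaurent (fun q => A.Y_laurent a (d q)) D l
  simp only [mulS_eq_finsum_sub_smul]
  refine finsum_curry _ <| (Set.finite_Icc (K, D) (k + l - D, l)).subset ?_
  rintro ⟨m, q⟩ h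
  have h₁ := le_of_izwPow_ne_zero 𝓕.isZModW_F (left_ne_zero_of_smul h)
  have h₂ := hD q fun h₀ => right_ne_zero_of_smul h (by simp [h₀])
  have h₃ := hK q m h₂ (by lia) (right_ne_zero_of_smul h)
  simp only [Set.mem_Icc, Prod.le_def]
  lia

theorem twist_substFProd (hd : IsLaurent d) (k l : ℤ) :
    A.twist (substFProd 𝓕 (fun v => A.Y a v) d k) l =
      ∑ᶠ m, mulS (izwPow 𝓕.Fzi m k) (A.twist fun q => A.Y a (d q) m) l := by
  rw [funext (A.substFProd_eq_finsum_mulS a hd k), A.twist_finsum]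
  · refine finsum_congr fun m => ?_
    rw [A.twist_mulS (A.isLaurent_Y_apply a hd m) (𝓕.isZModW_F.isLaurent_izwPow m k),
      𝓕.atInv_izwPow_F]
  · obtain ⟨D, hD⟩ := exists_le_of_isLaurent hd
    obtain ⟨K, hK⟩ := exists_le_of_forall_isLaurent (fun q => A.Y_laurent a (d q)) D l
    refine (Set.finite_Icc (K, D) (k + l - D, l)).subset ?_
    rintro ⟨m, q⟩ ⟨hq, h⟩
    rw [mulS_eq_finsum_sub_smul] at h
    obtain ⟨r, hr⟩ := exists_ne_zero_of_finsum_ne_zero h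
    have h₁ := le_of_izwPow_ne_zero 𝓕.isZModW_F (left_ne_zero_of_smul hr)
    have h₂ := hD r fun h₀ => right_ne_zero_of_smul hr (by simp [h₀])
    have h₃ := hK r m h₂ (by lia) (right_ne_zero_of_smul hr)
    simp only [Set.mem_Icc, Prod.le_def]
    lia

theorem finite_Y_twist (hd : IsLaurent d) (k l : ℤ) :
    {t : ℤ × ℤ × ℤ × ℤ | iotaPow 𝓕.inv t.1 (l - t.2.1) ≠ 0 ∧
      izwPow 𝓕.Fzi t.2.2.1 k (t.2.1 - t.2.2.2) ≠ 0 ∧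
      A.shift t.2.2.2 (A.Y a (d t.1) t.2.2.1) ≠ 0}.Finite := by
  obtain ⟨D, hD⟩ := exists_le_of_isLaurent hd
  obtain ⟨K, hK⟩ := exists_le_of_forall_isLaurent (fun q => A.Y_laurent a (d q)) D l
  refine (Set.finite_Icc (D, 0, K, 0) (l, l - D, k + l - D, l - D)).subset ?_
  rintro ⟨q, i, m, j⟩ ⟨h₁, h₂, h₃⟩
  have h₁ := le_of_iotaPow_ne_zero 𝓕.isNegZ_inv h₁
  have h₂ := le_of_izwPow_ne_zero 𝓕.isZModW_Fzi h₂
  have hj := A.nonneg_of_shift_ne_zero h₃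
  have h₄ := A.ne_zero_of_shift_ne_zero h₃
  have hq := hD q fun h₀ => h₄ (by simp [h₀])
  have hm := hK q m hq (by lia) h₄
  simp only [Set.mem_Icc, Prod.le_def]
  lia

theorem Y_twist (hd : IsLaurent d) (k l : ℤ) :
    A.Y a (A.twist d l) k =
      ∑ᶠ m, mulS (izwPow 𝓕.Fzi m k) (A.twist fun q => A.Y a (d q) m) l := by
  have hY : A.Y a (A.twist d l) k =
      ∑ᶠ p : ℤ × ℤ, iotaPow 𝓕.inv p.2 (l - p.1) • A.Y a (A.shift p.1 (d p.2)) k :=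
    map_finsum_smul (LinearMap.proj k ∘ₗ A.Y a) (A.finite_twist hd l)
  have hmul (m j q : ℤ) : ∑ᶠ i, iotaPow 𝓕.inv q (l - i) * izwPow 𝓕.Fzi m k (i - j) =
      mulS (izwPow 𝓕.Fzi m k) (iotaPow 𝓕.inv q) (l - j) := by
    rw [mulS, ← finsum_comp_equiv (Equiv.addRight j)]
    simp only [Equiv.coe_addRight, add_sub_cancel_right, smul_eq_mul, mul_comm, sub_sub,
      add_comm j]
  have hfin := A.finite_Y_twist a hd k l
  rw [hY]
  simp only [A.Y_shift_right, fun m => A.mulS_twist (A.isLaurent_Y_apply a hd m)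
    (𝓕.isZModW_Fzi.isLaurent_izwPow m k)]
  rw [finsum_smul_finsum_smul_swap (fun q i => iotaPow 𝓕.inv q (l - i))
    (fun _ i (p : ℤ × ℤ) => izwPow 𝓕.Fzi p.1 k (i - p.2))
    (fun q p => A.shift p.2 (A.Y a (d q) p.1)) hfin]
  simp only [hmul]
  rw [← finsum_comp_equiv (Equiv.prodAssoc ℤ ℤ ℤ).symm]
  refine finsum_curry _ <| (hfin.image fun t => (t.2.2.1, t.2.2.2, t.1)).subset ?_
  rintro ⟨m, j, q⟩ h
  obtain ⟨i, hi⟩ := exists_ne_zero_of_finsum_ne_zero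
    ((hmul m j q).trans_ne (left_ne_zero_of_smul h))
  exact ⟨(q, i, m, j),
    ⟨left_ne_zero_of_mul hi, right_ne_zero_of_mul hi, right_ne_zero_of_smul h⟩, rfl⟩

theorem isLocallyFinite_substFProd (hd : IsLaurent d) :
    IsLocallyFinite (substFProd 𝓕 (fun v => A.Y a v) d) := by
  obtain ⟨D, hD⟩ := exists_le_of_isLaurent hd
  intro k l
  obtain ⟨K, hK⟩ := exists_le_of_forall_isLaurent (fun q => A.Y_laurent a (d q)) D l
  refine ⟨min D (K + D - l), fun k' _ l' hl h => ?_⟩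
  obtain ⟨⟨m, q⟩, hmq⟩ := exists_ne_zero_of_finsum_ne_zero h
  have h₁ := le_of_izwPow_ne_zero 𝓕.isZModW_F (left_ne_zero_of_smul hmq)
  have h₂ := hD q fun h₀ => right_ne_zero_of_smul hmq (by simp [h₀])
  have h₃ := hK q m h₂ (by lia) (right_ne_zero_of_smul hmq)
  lia

theorem Y_Y_eq_twist_substFProd (a b c : V) (k l : ℤ) :
    A.Y a (A.Y b c l) k = A.twist (substFProd 𝓕 (fun v => A.Y a v) (A.Y c b) k) l := by
  rw [A.Y_eq_twist b c, A.Y_twist a (A.Y_laurent c b), A.twist_substFProd a (A.Y_laurent c b)]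

theorem isLocallyFinite_Y_Y_left (a b c : V) : IsLocallyFinite fun k l => A.Y (A.Y a c k) b l := by
  obtain ⟨D, hD⟩ := exists_le_of_isLaurent (A.Y_laurent a c)
  exact isLocallyFinite_of_isLaurent (fun k => A.Y_laurent (A.Y a c k) b)
    fun k l h => hD k fun h₀ => h (by simp [h₀])

theorem exists_mulS2_pow2_Fzi_Y_Y (a b c : V) : ∃ N,
    mulS2 (pow2 𝓕.Fzi N) (fun k l => A.Y a (A.Y b c l) k) =
      mulS2 (pow2 𝓕.Fzi N) fun k l => A.Y b (A.Y a c k) l := by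
  obtain ⟨N, hN⟩ := A.weak_assoc a c b
  refine ⟨N, ?_⟩
  simp only [A.Y_Y_eq_twist_substFProd a b c, A.Y_eq_twist b (A.Y a c _)]
  rw [← A.twist_mulS2 (A.isLocallyFinite_substFProd a (A.Y_laurent c b)),
    ← A.twist_mulS2 (A.isLocallyFinite_Y_Y_left a b c), hN]

end Products

end VertexFAlgebra

/-- weak commutativity in a vertex `F`-algebra: there is `M ≥ 0` with
`F(z,ι(w))^M Y(a,z)Y(b,w)c = F(z,ι(w))^M Y(b,w)Y(a,z)c` as bilateral series in
`V⟦z^{±1}, w^{±1}⟧` (coefficient of `z^k w^l`), and equivalently with `(z-w)^M` in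
place of `F(z,ι(w))^M`. -/
theorem weak_commutativity (R : Type*) [CommRing R] (𝓕 : FormalGroupLaw R)
    (V : Type*) [AddCommGroup V] [Module R V] (A : VertexFAlgebra R 𝓕 V)
    (a b c : V) :
    (∃ M : ℕ, mulS2 (pow2 𝓕.Fzi M) (fun k l => A.Y a (A.Y b c l) k)
        = mulS2 (pow2 𝓕.Fzi M) (fun k l => A.Y b (A.Y a c k) l)) ∧
    (∃ M : ℕ, mulS2 (pow2 (zmw R) M) (fun k l => A.Y a (A.Y b c l) k)
        = mulS2 (pow2 (zmw R) M) (fun k l => A.Y b (A.Y a c k) l)) := by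
  obtain ⟨M, hM⟩ := A.exists_mulS2_pow2_Fzi_Y_Y a b c
  obtain ⟨h, hh, hzw⟩ := 𝓕.exists_pow2_zmw_eq
  have hF := 𝓕.isZModW_Fzi.isPowerSeries.pow2 M
  refine ⟨⟨M, hM⟩, M, ?_⟩
  rw [hzw, ← ZWSeries.mulS2_assoc (hh.pow2 M) hF (A.isLocallyFinite_Y a (A.Y_laurent b c)).swap,
    hM, ZWSeries.mulS2_assoc (hh.pow2 M) hF (A.isLocallyFinite_Y b (A.Y_laurent a c))]
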